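/- Let C be an X-completely transitive code in H(m,q) with m ≥ 5, |C| ≥ 2, X ∩ B = 1 and minimum distance δ = m. Then q = 2, C is equivalent to the binary repetition code Rep(m,2), μ(X) = Sym(Fin m), and for each α ∈ C the stabilizer X_α = {x ∈ X : α^x = α} satisfies μ(X_α) = Alt(Fin m). -/

import Mathlib

/-!
The code consists of words that differ pairwise in every coordinate. Automorphisms preserve the
relation of agreeing in some coordinate. Comparing, for two vertices of `C_1` and then of `C_2`,
the numbers of codewords agreeing with them in some coordinate shows that every letter occurs in
every coordinate and that there are only two codewords `α` and `β` (`IsCT.exists_codeword_apply_eq`,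
`IsCT.eq_or_eq`). So `q = 2` and `C` is a copy of the binary repetition code.

Identify vertices with subsets of `Fin m` through `γ ↦ {i | γ i ≠ α i}`. Let `G = μ(X)` and let
`H = μ(X_α)`. Since `X ∩ B = 1`, an element of `X` is determined by its image in `G`, so `H` has
index two in `G`; complete transitivity says that `H` is transitive on the `k`-subsets for
`2 * k < m`, and nearly so for `2 * k = m`. This is recorded in the structure `TransPair`, and the
core of the proof is the purely permutation-theoretic fact `TransPair.eq_top` that `G` is the whole
symmetric group. A subgroup of index two of the symmetric group is the alternating group.

For `m ≥ 7`, a slight strengthening of Bertrand's postulate gives a prime `p` with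
`m / 2 < p ≤ m - 2`. It divides the number of `(m - p + 1)`-subsets, so `H` contains an element `c`
of order `p`, which is a `p`-cycle as `m < 2 * p`. By Jordan's theorem `H` is `(m - p + 1)`-fold
transitive. A Frattini argument now yields `y ∈ H` normalizing `⟨c⟩` that acts as a transposition
`s` on the fixed points of `c`, and `a ∈ G` outside `H` normalizing `⟨c⟩` and acting trivially
on those fixed points. Since `Aut ⟨c⟩` is cyclic, a word in `a` and `y` centralizes `c`, with
exponents whose parities force one of two things: either `s` times a power of `c`, and hence `s`,
lies in `G`, and the primitive group `G` is everything; or an element of `G` outside `H` is a power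
of `c ∈ H`, which is absurd.

For `m = 5` and `m = 6` there is a `5`-cycle `c` in `H` and an element `a` of `G` outside `H` that
acts on the support of `c` as multiplication by `2` or `4` on the integers modulo `5`. A finite
search over one further element `t ∈ H` produces an element of `G` moving two or three points. The
only exceptions have degree `6` and lead to `PSL(2, 5) < PGL(2, 5)`, which is not transitive enough
on triples.
-/

namespace CTC

variable {m : ℕ} {Q : Type*}

/-- The automorphism of the Hamming graph `H(m,q)` given by the pair `(g, σ)`,
acting on a vertex `α` by `(α^x) i = (g (σ⁻¹ i)) (α (σ⁻¹ i))`. -/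
def toPerm (g : Fin m → Equiv.Perm Q) (σ : Equiv.Perm (Fin m)) :
    Equiv.Perm (Fin m → Q) :=
  (Equiv.piCongrRight g).trans (σ.arrowCongr (Equiv.refl Q))

@[simp] lemma toPerm_apply (g : Fin m → Equiv.Perm Q) (σ : Equiv.Perm (Fin m))
    (α : Fin m → Q) (i : Fin m) :
    toPerm g σ α i = g (σ⁻¹ i) (α (σ⁻¹ i)) := rfl

lemma toPerm_one : toPerm (fun _ : Fin m => (1 : Equiv.Perm Q)) 1 = 1 := by
  ext α i
  rfl

lemma toPerm_mul (g h : Fin m → Equiv.Perm Q) (σ τ : Equiv.Perm (Fin m)) :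
    toPerm g σ * toPerm h τ = toPerm (fun j => g (τ j) * h j) (σ * τ) := by
  ext α i
  simp [toPerm_apply, Equiv.Perm.mul_apply]

lemma toPerm_inv (g : Fin m → Equiv.Perm Q) (σ : Equiv.Perm (Fin m)) :
    (toPerm g σ)⁻¹ = toPerm (fun i => (g (σ⁻¹ i))⁻¹) σ⁻¹ := by
  rw [inv_eq_iff_mul_eq_one, toPerm_mul]
  have h1 : (fun j => g (σ⁻¹ j) * (g (σ⁻¹ j))⁻¹) = fun _ : Fin m => (1 : Equiv.Perm Q) := by
    funext j; simp
  have h2 : σ * σ⁻¹ = 1 := by simp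
  rw [show (fun j => g ((σ⁻¹ : Equiv.Perm (Fin m)) j) * (g (σ⁻¹ j))⁻¹)
      = fun _ : Fin m => (1 : Equiv.Perm Q) from h1, h2, toPerm_one]

/-- The automorphism group of the Hamming graph, as a subgroup of the
permutations of the vertex set. -/
def AutG (m : ℕ) (Q : Type*) : Subgroup (Equiv.Perm (Fin m → Q)) where
  carrier := {x | ∃ g σ, x = toPerm g σ}
  one_mem' := ⟨fun _ => 1, 1, toPerm_one.symm⟩
  mul_mem' := by
    rintro x y ⟨g, σ, rfl⟩ ⟨h, τ, rfl⟩
    exact ⟨_, _, toPerm_mul g h σ τ⟩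
  inv_mem' := by
    rintro x ⟨g, σ, rfl⟩
    exact ⟨_, _, toPerm_inv g σ⟩

/-- The base group `B` of `Aut(Γ)`: the automorphisms `(g, σ)` with `σ = 1`. -/
def BaseG (m : ℕ) (Q : Type*) : Subgroup (Equiv.Perm (Fin m → Q)) where
  carrier := {x | ∃ g, x = toPerm g 1}
  one_mem' := ⟨fun _ => 1, toPerm_one.symm⟩
  mul_mem' := by
    rintro x y ⟨g, rfl⟩ ⟨h, rfl⟩
    refine ⟨fun j => g j * h j, ?_⟩
    rw [toPerm_mul]
    simp
  inv_mem' := by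
    rintro x ⟨g, rfl⟩
    refine ⟨fun i => (g i)⁻¹, ?_⟩
    rw [toPerm_inv]
    simp

/-- The projection `μ(X)` of a subgroup `X ≤ Aut(Γ)` to the group of
permutations of the coordinates. -/
def ProjGroup (X : Subgroup (Equiv.Perm (Fin m → Q))) : Subgroup (Equiv.Perm (Fin m)) where
  carrier := {σ | ∃ g, toPerm g σ ∈ X}
  one_mem' := ⟨fun _ => 1, by rw [toPerm_one]; exact X.one_mem⟩
  mul_mem' := by
    rintro σ τ ⟨g, hg⟩ ⟨h, hh⟩
    exact ⟨fun j => g (τ j) * h j, by rw [← toPerm_mul]; exact X.mul_mem hg hh⟩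
  inv_mem' := by
    rintro σ ⟨g, hg⟩
    exact ⟨fun i => (g (σ⁻¹ i))⁻¹, by rw [← toPerm_inv]; exact X.inv_mem hg⟩

variable [DecidableEq Q]

/-- `d(γ, C)`: the distance from a vertex `γ` to the code `C`. -/
noncomputable def distTo (C : Set (Fin m → Q)) (γ : Fin m → Q) : ℕ :=
  sInf {d | ∃ β ∈ C, hammingDist γ β = d}

/-- `C_i`: the set of vertices at distance `i` from the code `C`. -/
def cell (C : Set (Fin m → Q)) (i : ℕ) : Set (Fin m → Q) :=
  {γ | distTo C γ = i}

/-- The covering radius `ρ` of the code `C`. -/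
noncomputable def covRad (C : Set (Fin m → Q)) : ℕ :=
  sSup {e | ∃ γ, distTo C γ = e}

/-- `S` is a single orbit of the subgroup `X`. -/
def IsOrbitOf (X : Subgroup (Equiv.Perm (Fin m → Q))) (S : Set (Fin m → Q)) : Prop :=
  ∃ γ, S = {β | ∃ x ∈ X, x γ = β}

/-- `C` is `(X,s)`-neighbour transitive: `C_i` is an `X`-orbit for `0 ≤ i ≤ s`. -/
def IsNT (C : Set (Fin m → Q)) (X : Subgroup (Equiv.Perm (Fin m → Q))) (s : ℕ) : Prop :=
  ∀ i ≤ s, IsOrbitOf X (cell C i)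

/-- `C` is `X`-completely transitive: `C_i` is an `X`-orbit for `0 ≤ i ≤ ρ`. -/
def IsCT (C : Set (Fin m → Q)) (X : Subgroup (Equiv.Perm (Fin m → Q))) : Prop :=
  IsNT C X (covRad C)

/-- `δ` is the minimum distance of the code `C`. -/
def IsMinDist (C : Set (Fin m → Q)) (δ : ℕ) : Prop :=
  IsLeast {d | ∃ α ∈ C, ∃ β ∈ C, α ≠ β ∧ hammingDist α β = d} δ

/-- The repetition code `Rep(m,q)`: the set of constant vertices. -/
def RepCode (m : ℕ) (Q : Type*) : Set (Fin m → Q) := {α | ∃ a, α = fun _ => a}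

/-- Two codes are equivalent if one is the image of the other under an
automorphism of the Hamming graph. -/
def CodeEquiv (C C' : Set (Fin m → Q)) : Prop :=
  ∃ x ∈ AutG m Q, ⇑x '' C = C'

/-- `Γ_k(γ)`: the set of vertices at Hamming distance `k` from `γ`. -/
def sphere (γ : Fin m → Q) (k : ℕ) : Set (Fin m → Q) := {β | hammingDist γ β = k}

/-- `C` is `s`-regular. -/
def IsSReg (C : Set (Fin m → Q)) (s : ℕ) : Prop :=
  ∀ i ≤ s, ∀ k ≤ m, ∀ γ₁ ∈ cell C i, ∀ γ₂ ∈ cell C i,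
    (sphere γ₁ k ∩ C).ncard = (sphere γ₂ k ∩ C).ncard

/-- `C` is completely regular. -/
def IsCR (C : Set (Fin m → Q)) : Prop := IsSReg C (covRad C)

end CTC

namespace CTC

/-! ### A strengthening of Bertrand's postulate -/

/-- The real inequality behind the strengthened Bertrand postulate: Mathlib's
`Bertrand.real_main_inequality` with an extra factor `2 * x` on the left. -/
theorem real_main_inequality {x : ℝ} (x_large : (512 : ℝ) ≤ x) :
    (2 * x) * x * (2 * x) ^ √(2 * x) * 4 ^ (2 * x / 3) ≤ 4 ^ x := by
  have h4 : (0 : ℝ) < 4 := by norm_num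
  let f : ℝ → ℝ := fun x =>
    Real.log 2 + 2 * Real.log x + √(2 * x) * Real.log (2 * x) - Real.log 4 / 3 * x
  have hf' : ∀ x, 0 < x → 0 < (2 * x) * x * (2 * x) ^ √(2 * x) / 4 ^ (x / 3) := fun x h =>
    div_pos (mul_pos (by positivity) (Real.rpow_pos_of_pos (by positivity) _))
      (Real.rpow_pos_of_pos h4 _)
  have hf : ∀ x, 0 < x → f x = Real.log ((2 * x) * x * (2 * x) ^ √(2 * x) / 4 ^ (x / 3)) := by
    intro x h5
    have h6 : 0 < 2 * x := by positivity
    have h7 := Real.rpow_pos_of_pos h6 (√(2 * x))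
    rw [Real.log_div (by positivity) (by positivity), Real.log_mul (by positivity) h7.ne',
      Real.log_rpow h6, Real.log_rpow h4, Real.log_mul h6.ne' h5.ne',
      Real.log_mul (by norm_num) h5.ne']
    simp only [f]
    rw [Real.log_mul (by norm_num) h5.ne']
    ring
  have h5 : 0 < x := lt_of_lt_of_le (by norm_num1) x_large
  rw [← div_le_one (Real.rpow_pos_of_pos h4 x), ← div_div_eq_mul_div, ← Real.rpow_sub h4, ←
    mul_div 2 x, mul_div_left_comm, ← mul_one_sub, (by norm_num1 : (1 : ℝ) - 2 / 3 = 1 / 3),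
    mul_one_div, ← Real.log_nonpos_iff (hf' x h5).le, ← hf x h5]
  have h : ConcaveOn ℝ (Set.Ioi 0.5) f := by
    apply ConcaveOn.sub
    · apply ConcaveOn.add
      · have h1 : ConcaveOn ℝ (Set.Ioi (0.5 : ℝ)) Real.log :=
          strictConcaveOn_log_Ioi.concaveOn.subset
            (Set.Ioi_subset_Ioi (by norm_num)) (convex_Ioi 0.5)
        exact (concaveOn_const _ (convex_Ioi _)).add (h1.smul (by norm_num : (0:ℝ) ≤ 2))
      convert!
        ((strictConcaveOn_sqrt_mul_log_Ioi.concaveOn.comp_linearMap ((2 : ℝ) • LinearMap.id)))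
        using 1
      ext x
      simp only [Set.mem_Ioi, Set.mem_preimage, LinearMap.smul_apply,
        LinearMap.id_coe, id_eq, smul_eq_mul]
      rw [← mul_lt_mul_iff_right₀ (two_pos)]
      norm_num1
      rfl
    apply ConvexOn.smul
    · refine div_nonneg (Real.log_nonneg (by norm_num1)) (by norm_num1)
    · exact convexOn_id (convex_Ioi (0.5 : ℝ))
  suffices ∃ x1 x2, 0.5 < x1 ∧ x1 < x2 ∧ x2 ≤ x ∧ 0 ≤ f x1 ∧ f x2 ≤ 0 by
    obtain ⟨x1, x2, h1, h2, h0, h3, h4⟩ := this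
    exact (h.right_le_of_le_left'' h1 ((h1.trans h2).trans_le h0) h2 h0 (h4.trans h3)).trans h4
  refine ⟨18, 512, by norm_num1, by norm_num1, x_large, ?_, ?_⟩
  · have : √(2 * 18 : ℝ) = 6 :=
      (Real.sqrt_eq_iff_mul_self_eq_of_pos (by norm_num1)).mpr (by norm_num1)
    rw [hf _ (by norm_num1), Real.log_nonneg_iff (by positivity), this, one_le_div (by norm_num1)]
    norm_num1
  · have h32 : √(2 * 512 : ℝ) = 32 :=
      (Real.sqrt_eq_iff_mul_self_eq_of_pos (by norm_num1)).mpr (by norm_num1)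
    have l4 : Real.log 4 = 2 * Real.log 2 := by
      rw [← Real.log_rpow (by norm_num)]; norm_num
    have l512 : Real.log 512 = 9 * Real.log 2 := by
      rw [← Real.log_rpow (by norm_num)]; norm_num
    have l1024 : Real.log (2 * 512) = 10 * Real.log 2 := by
      rw [← Real.log_rpow (by norm_num)]; norm_num
    simp only [f, h32]
    rw [l4, l512, l1024]
    have := Real.log_pos (by norm_num : (1 : ℝ) < 2)
    nlinarith

theorem nat_main_inequality {n : ℕ} (n_large : 512 ≤ n) :
    (2 * n) * n * (2 * n) ^ Nat.sqrt (2 * n) * 4 ^ (2 * n / 3) ≤ 4 ^ n := by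
  rw [← @Nat.cast_le ℝ]
  simp only [Nat.cast_mul, Nat.cast_pow, ← Real.rpow_natCast, Nat.cast_ofNat]
  refine _root_.trans ?_ (real_main_inequality (by exact_mod_cast n_large))
  gcongr
  · have n2_pos : 0 < 2 * n := by positivity
    exact mod_cast n2_pos
  · exact_mod_cast Real.nat_sqrt_le_real_sqrt
  · norm_num1
  · exact Nat.cast_div_le.trans (by norm_cast)

/-- If `2 * n - 1` is the only possible prime in `(n, 2 * n]`, then the central binomial
coefficient is small. -/
theorem centralBinom_le_of_no_prime (n : ℕ) (n_large : 2 < n)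
    (no_prime : ∀ p : ℕ, p.Prime → n < p → 2 * n < p + 3) :
    n.centralBinom ≤ (2 * n) * ((2 * n) ^ Nat.sqrt (2 * n) * 4 ^ (2 * n / 3)) := by
  have n2_pos : 1 ≤ 2 * n := by omega
  let f x := x ^ n.centralBinom.factorization x
  have hf1 : ∀ x, 1 ≤ f x := by
    intro x
    rcases Nat.eq_zero_or_pos x with rfl | hx
    · simp [f]
    · exact Nat.one_le_pow _ _ hx
  let R := {p ∈ Finset.range (2 * n / 3 + 1) | Nat.Prime p}
  have hsub : ∏ x ∈ insert (2 * n - 1) R, f x = n.centralBinom := by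
    rw [← n.prod_pow_factorization_centralBinom]
    apply Finset.prod_subset
    · intro x hx
      simp only [R, Finset.mem_insert, Finset.mem_filter, Finset.mem_range] at hx ⊢
      omega
    intro x hx h2x
    simp only [R, Finset.mem_insert, Finset.mem_filter, Finset.mem_range, not_or, not_and] at hx h2x
    by_cases hp : x.Prime
    · have h3 : 2 * n < 3 * x := by
        by_contra h
        exact h2x.2 (by omega) hp
      rcases le_or_gt x n with h | h
      · simp only [f]
        rw [Nat.factorization_centralBinom_of_two_mul_self_lt_three_mul n_large h h3, Nat.pow_zero]
      · -- the even numbers `2 * n` and `2 * n - 2` are not prime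
        exfalso
        have h1 := no_prime x hp h
        have h2 := hp.eq_two_or_odd
        omega
    · simp only [f]
      rw [Nat.factorization_eq_zero_of_not_prime n.centralBinom hp, Nat.pow_zero]
  have hf2 : ∀ p, f p ≤ 2 * n := fun p => Nat.pow_factorization_choose_le (by omega)
  have hR : ∏ x ∈ R, f x ≤ (2 * n) ^ Nat.sqrt (2 * n) * 4 ^ (2 * n / 3) := by
    rw [← Finset.prod_filter_mul_prod_filter_not R (· ≤ Nat.sqrt (2 * n))]
    apply mul_le_mul'
    · refine (Finset.prod_le_prod' fun p _ => hf2 p).trans ?_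
      have : (Finset.Icc 1 (Nat.sqrt (2 * n))).card = Nat.sqrt (2 * n) := by
        rw [Nat.card_Icc, Nat.add_sub_cancel]
      rw [Finset.prod_const]
      refine pow_right_mono₀ n2_pos ((Finset.card_le_card fun x hx => ?_).trans this.le)
      obtain ⟨h1, h2⟩ := Finset.mem_filter.1 hx
      exact Finset.mem_Icc.mpr ⟨(Finset.mem_filter.1 h1).2.one_lt.le, h2⟩
    · refine le_trans ?_ (primorial_le_four_pow (2 * n / 3))
      refine (Finset.prod_le_prod' fun p hp => (?_ : f p ≤ p)).trans ?_
      · obtain ⟨h1, h2⟩ := Finset.mem_filter.1 hp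
        refine (pow_right_mono₀ (Finset.mem_filter.1 h1).2.one_lt.le ?_).trans (pow_one p).le
        exact Nat.factorization_choose_le_one (Nat.sqrt_lt'.mp <| not_le.1 h2)
      refine Finset.prod_le_prod_of_subset_of_one_le' (Finset.filter_subset _ _) ?_
      exact fun p hp _ => (Finset.mem_filter.1 hp).2.one_lt.le
  rw [← hsub]
  by_cases hm : 2 * n - 1 ∈ R
  · rw [Finset.insert_eq_of_mem hm]
    exact hR.trans (Nat.le_mul_of_pos_left _ (by omega))
  · rw [Finset.prod_insert hm]
    exact Nat.mul_le_mul (hf2 _) hR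

/-- A slight strengthening of Bertrand's postulate: for `n ≥ 4` there is a prime in
`(n, 2 * n - 3]`. -/
theorem exists_prime_lt_le (n : ℕ) (hn : 4 ≤ n) :
    ∃ p : ℕ, p.Prime ∧ n < p ∧ p + 3 ≤ 2 * n := by
  rcases le_or_gt 512 n with h | h
  · have key := Nat.four_pow_lt_mul_centralBinom n (by omega)
    contrapose! key
    have h1 := centralBinom_le_of_no_prime n (by omega) key
    have h2 := nat_main_inequality h
    calc n * n.centralBinom
        ≤ n * ((2 * n) * ((2 * n) ^ Nat.sqrt (2 * n) * 4 ^ (2 * n / 3))) := by gcongr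
      _ = (2 * n) * n * (2 * n) ^ Nat.sqrt (2 * n) * 4 ^ (2 * n / 3) := by ring
      _ ≤ 4 ^ n := h2
  · have step : ∀ a p : ℕ, p.Prime → p + 3 ≤ 2 * a → a ≤ n → n < p →
        ∃ p : ℕ, p.Prime ∧ n < p ∧ p + 3 ≤ 2 * n :=
      fun a p hp h1 h2 h3 => ⟨p, hp, h3, by omega⟩
    rcases lt_or_ge n 5 with h1 | h1
    · exact step 4 5 (by norm_num) (by norm_num) hn h1
    rcases lt_or_ge n 7 with h2 | h2
    · exact step 5 7 (by norm_num) (by norm_num) h1 h2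
    rcases lt_or_ge n 11 with h3 | h3
    · exact step 7 11 (by norm_num) (by norm_num) h2 h3
    rcases lt_or_ge n 19 with h4 | h4
    · exact step 11 19 (by norm_num) (by norm_num) h3 h4
    rcases lt_or_ge n 31 with h5 | h5
    · exact step 19 31 (by norm_num) (by norm_num) h4 h5
    rcases lt_or_ge n 59 with h6 | h6
    · exact step 31 59 (by norm_num) (by norm_num) h5 h6
    rcases lt_or_ge n 113 with h7 | h7
    · exact step 59 113 (by norm_num) (by norm_num) h6 h7
    rcases lt_or_ge n 223 with h8 | h8
    · exact step 113 223 (by norm_num) (by norm_num) h7 h8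
    rcases lt_or_ge n 443 with h9 | h9
    · exact step 223 443 (by norm_num) (by norm_num) h8 h9
    · exact step 443 883 (by norm_num) (by norm_num) h9 (by omega)

/-- For `m ≥ 7` there is a prime `p` with `m / 2 + 1 ≤ p ≤ m - 2`. -/
theorem exists_prime_window (m : ℕ) (hm : 7 ≤ m) :
    ∃ p : ℕ, p.Prime ∧ p + 2 ≤ m ∧ m + 2 ≤ 2 * p := by
  obtain ⟨p, hp, h1, h2⟩ := exists_prime_lt_le ((m + 1) / 2) (by omega)
  exact ⟨p, hp, by omega, by omega⟩

/-! ### The groups induced on the coordinates -/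

/-- The group-theoretic shadow of a binary code `{α, β}` with `β` antipodal to `α`: `G` is the
group induced on the coordinates and `H` (of index two in `G`) is the part of it induced by the
stabilizer of `α`. Identifying a vertex `γ` with the set `{i | γ i ≠ α i}`, elements of `H` act
as on subsets, while elements of `G` outside `H` act as on subsets followed by complementation;
`homog` and `half` say that this action is transitive on each `C_k`. -/
structure TransPair {m : ℕ} (H G : Subgroup (Equiv.Perm (Fin m))) : Prop where
  le : H ≤ G
  mul_mem : ∀ a ∈ G, ∀ b ∈ G, a ∉ H → b ∉ H → a * b ∈ H
  exists_notMem : ∃ a ∈ G, a ∉ H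
  homog : ∀ S T : Finset (Fin m), S.card = T.card → 2 * S.card < m → ∃ σ ∈ H, S.image σ = T
  half : ∀ S T : Finset (Fin m), S.card = T.card → 2 * S.card = m →
    (∃ σ ∈ H, S.image σ = T) ∨ (∃ σ ∈ G, σ ∉ H ∧ S.image σ = Tᶜ)

lemma image_perm_compl {ι : Type*} [Fintype ι] [DecidableEq ι] (S : Finset ι)
    (π : Equiv.Perm ι) : Sᶜ.image π = (S.image π)ᶜ := by
  ext x
  simp only [Finset.mem_image, Finset.mem_compl]
  refine ⟨?_, fun hx => ⟨π.symm x, fun hS => hx ⟨_, hS, by simp⟩, by simp⟩⟩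
  rintro ⟨y, hy, rfl⟩ ⟨z, hz, he⟩
  exact hy (π.injective he ▸ hz)

namespace TransPair

variable {m : ℕ} {H G : Subgroup (Equiv.Perm (Fin m))}

lemma sq_mem (h : TransPair H G) {a : Equiv.Perm (Fin m)} (ha : a ∈ G) : a * a ∈ H := by
  by_cases haH : a ∈ H
  · exact H.mul_mem haH haH
  · exact h.mul_mem a ha a ha haH haH

lemma conj_mem (h : TransPair H G) {a b : Equiv.Perm (Fin m)} (ha : a ∈ G) (hb : b ∈ H) :
    a * b * a⁻¹ ∈ H := by
  by_cases haH : a ∈ H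
  · exact H.mul_mem (H.mul_mem haH hb) (H.inv_mem haH)
  · apply h.mul_mem _ (G.mul_mem ha (h.le hb)) _ (G.inv_mem ha)
    · exact fun hab => haH ((H.mul_mem_cancel_right hb).1 hab)
    · exact fun hi => haH (inv_mem_iff.1 hi)

lemma odd_mem (h : TransPair H G) {a : Equiv.Perm (Fin m)} (ha : a ∈ G) (ho : Odd (orderOf a)) :
    a ∈ H := by
  obtain ⟨k, hk⟩ := ho
  have : a = a ^ (k + 1) * a ^ (k + 1) := by
    rw [← pow_add, show k + 1 + (k + 1) = (2 * k + 1) + 1 by ring, pow_succ, ← hk,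
      pow_orderOf_eq_one, one_mul]
  rw [this]
  exact h.sq_mem (G.pow_mem ha _)

lemma top_of_alternating (h : TransPair H G) (hA : alternatingGroup (Fin m) ≤ G) : G = ⊤ := by
  -- a 3-cycle is a square in `G`, so it lies in `H`
  have hAH : alternatingGroup (Fin m) ≤ H := by
    rw [← Equiv.Perm.closure_three_cycles_eq_alternating, Subgroup.closure_le]
    intro t ht
    refine h.odd_mem (hA ?_) ?_
    · exact (Equiv.Perm.IsThreeCycle.mem_alternatingGroup ht)
    · rw [Equiv.Perm.IsThreeCycle.orderOf ht]; decide
  obtain ⟨a, ha, haH⟩ := h.exists_notMem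
  have hs : Equiv.Perm.sign a = -1 := by
    rcases Int.units_eq_one_or (Equiv.Perm.sign a) with h1 | h1
    · exact absurd (hAH (Equiv.Perm.mem_alternatingGroup.2 h1)) haH
    · exact h1
  rw [eq_top_iff]
  intro b _
  rcases Int.units_eq_one_or (Equiv.Perm.sign b) with h1 | h1
  · exact hA (Equiv.Perm.mem_alternatingGroup.2 h1)
  · have : b * a⁻¹ ∈ G := hA (by
      rw [Equiv.Perm.mem_alternatingGroup, map_mul, map_inv, h1, hs]; rfl)
    exact (G.mul_mem_cancel_right (G.inv_mem ha)).1 this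

lemma eq_alternating (h : TransPair H G) (hG : G = ⊤) : H = alternatingGroup (Fin m) := by
  apply Equiv.Perm.eq_alternatingGroup_of_index_eq_two
  rw [Subgroup.index_eq_two_iff]
  obtain ⟨a, ha, haH⟩ := h.exists_notMem
  refine ⟨a, fun b => ?_⟩
  by_cases hb : b ∈ H
  · right
    exact ⟨hb, fun hab => haH ((H.mul_mem_cancel_left hb).1 hab)⟩
  · left
    exact ⟨h.mul_mem b (hG ▸ Subgroup.mem_top b) a ha hb haH, hb⟩

open scoped Pointwise in
/-- A 2-homogeneous group of degree at least `5` is primitive. -/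
lemma isPreprimitive (h : TransPair H G) (hm : 5 ≤ m) : MulAction.IsPreprimitive H (Fin m) := by
  have ht : MulAction.IsPretransitive H (Fin m) := by
    refine ⟨fun x y => ?_⟩
    obtain ⟨σ, hσ, he⟩ := h.homog {x} {y} (by simp) (by simp; omega)
    refine ⟨⟨σ, hσ⟩, ?_⟩
    simpa using he
  refine { isTrivialBlock_of_isBlock := ?_ }
  intro B hB
  by_contra hne
  simp only [MulAction.IsTrivialBlock, not_or, Set.not_subsingleton_iff] at hne
  obtain ⟨⟨x, hx, y, hy, hxy⟩, h2⟩ := hne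
  obtain ⟨z, hz⟩ := (Set.ne_univ_iff_exists_notMem B).1 h2
  have hxz : x ≠ z := fun e => hz (e ▸ hx)
  obtain ⟨σ, hσ, he⟩ := h.homog {x, y} {x, z} (by rw [Finset.card_pair hxy, Finset.card_pair hxz])
    (by rw [Finset.card_pair hxy]; omega)
  have hsub : ∀ w ∈ ({x, z} : Finset (Fin m)), w ∈ (⟨σ, hσ⟩ : H) • B := by
    intro w hw
    rw [← he] at hw
    obtain ⟨v, hv, rfl⟩ := Finset.mem_image.1 hw
    refine ⟨v, ?_, rfl⟩
    simp only [Finset.mem_insert, Finset.mem_singleton] at hv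
    rcases hv with rfl | rfl
    · exact hx
    · exact hy
  have hBB : (⟨σ, hσ⟩ : H) • B = B := by
    rcases MulAction.isBlock_iff_smul_eq_or_disjoint.1 hB ⟨σ, hσ⟩ with h3 | h3
    · exact h3
    · exact absurd hx (Set.disjoint_left.1 h3 (hsub x (by simp)))
  exact hz (hBB ▸ hsub z (by simp))

lemma isPreprimitive' (h : TransPair H G) (hm : 5 ≤ m) : MulAction.IsPreprimitive G (Fin m) := by
  have := h.isPreprimitive hm
  let f : Fin m →ₑ[Subgroup.inclusion h.le] Fin m := ⟨id, fun _ _ => rfl⟩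
  exact MulAction.IsPreprimitive.of_surjective (f := f) Function.surjective_id

/-- `G` is primitive, so by the theorems of Jordan a transposition or a 3-cycle in `G` suffices. -/
lemma top_of_support (h : TransPair H G) (hm : 5 ≤ m) {w : Equiv.Perm (Fin m)} (hw : w ∈ G)
    (h1 : w ≠ 1) (h3 : w.support.card ≤ 3) : G = ⊤ := by
  have hG := h.isPreprimitive' hm
  have h0 : w.support.card ≠ 0 := fun h0 => h1 (by simpa using h0)
  have h2 := Equiv.Perm.card_support_ne_one w
  obtain h2 | h3 : w.support.card = 2 ∨ w.support.card = 3 := by omega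
  · exact Equiv.Perm.subgroup_eq_top_of_isPreprimitive_of_isSwap_mem hG w
      (Equiv.Perm.card_support_eq_two.1 h2) hw
  · exact h.top_of_alternating
      (Equiv.Perm.alternatingGroup_le_of_isPreprimitive_of_isThreeCycle_mem hG
        (card_support_eq_three_iff.1 h3) hw)

/-- Relabelling the coordinates by `π`. -/
lemma conj (h : TransPair H G) (π : Equiv.Perm (Fin m)) :
    TransPair (H.comap (MulAut.conj π).toMonoidHom) (G.comap (MulAut.conj π).toMonoidHom) := by
  have key : ∀ (S T : Finset (Fin m)) (σ : Equiv.Perm (Fin m)),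
      (S.image π).image σ = T.image π → S.image ⇑(π⁻¹ * σ * π) = T := by
    intro S T σ he
    rw [Finset.image_image] at he
    have := congrArg (Finset.image ⇑π⁻¹) he
    rw [Finset.image_image, Finset.image_image] at this
    have e : ⇑π⁻¹ ∘ ⇑π = id := by ext x; simp
    rw [e, Finset.image_id] at this
    exact this
  have hcard : ∀ S : Finset (Fin m), (S.image π).card = S.card := fun S =>
    Finset.card_image_of_injective _ π.injective
  have hmem : ∀ (K : Subgroup (Equiv.Perm (Fin m))) (σ : Equiv.Perm (Fin m)),
      π⁻¹ * σ * π ∈ K.comap (MulAut.conj π).toMonoidHom ↔ σ ∈ K := by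
    intro K σ
    rw [Subgroup.mem_comap]
    simp [mul_assoc]
  refine ⟨Subgroup.comap_mono h.le, ?_, ?_, ?_, ?_⟩
  · intro a ha b hb ha' hb'
    rw [Subgroup.mem_comap, map_mul]
    exact h.mul_mem _ ha _ hb ha' hb'
  · obtain ⟨a, ha, ha'⟩ := h.exists_notMem
    exact ⟨π⁻¹ * a * π, (hmem G a).2 ha, fun hn => ha' ((hmem H a).1 hn)⟩
  · intro S T hST hS
    obtain ⟨σ, hσ, he⟩ := h.homog (S.image π) (T.image π) (by rw [hcard, hcard, hST])
      (by rwa [hcard])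
    exact ⟨_, (hmem H σ).2 hσ, key _ _ _ he⟩
  · intro S T hST hS
    rcases h.half (S.image π) (T.image π) (by rw [hcard, hcard, hST])
      (by rwa [hcard]) with ⟨σ, hσ, he⟩ | ⟨σ, hσ, hσ', he⟩
    · exact Or.inl ⟨_, (hmem H σ).2 hσ, key _ _ _ he⟩
    · refine Or.inr ⟨_, (hmem G σ).2 hσ, fun hn => hσ' ((hmem H σ).1 hn), key _ _ _ ?_⟩
      rw [he, image_perm_compl]

lemma top_of_conj {π : Equiv.Perm (Fin m)} (h : G.comap (MulAut.conj π).toMonoidHom = ⊤) :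
    G = ⊤ := by
  rw [eq_top_iff]
  intro g _
  have : π⁻¹ * g * π ∈ G.comap (MulAut.conj π).toMonoidHom := h ▸ Subgroup.mem_top _
  rw [Subgroup.mem_comap] at this
  simpa [mul_assoc] using this

/-- Orbit counting on `k`-subsets. When `2 * k = m` the orbit of `G` may miss half of the
`k`-subsets, which costs a factor of two. -/
lemma prime_dvd_card (h : TransPair H G) {p k : ℕ} (hp : p.Prime) (hp2 : p ≠ 2)
    (hk : 2 * k ≤ m) (hd : p ∣ m.choose k) : p ∣ Nat.card G := by
  classical
  open scoped Pointwise in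
  obtain ⟨S, -, hS⟩ := Finset.exists_subset_card_eq
    (show k ≤ (Finset.univ : Finset (Fin m)).card by simp; omega)
  let O : Finset (Finset (Fin m)) := Finset.univ.filter (fun T => ∃ σ ∈ G, S.image σ = T)
  have hO : ∀ T, T ∈ O ↔ ∃ σ ∈ G, S.image σ = T := by simp [O]
  have hOG : O.card ∣ Nat.card G := by
    have : (MulAction.orbit G S : Set (Finset (Fin m))) = O := by
      ext T
      simp only [MulAction.mem_orbit_iff, Finset.mem_coe, hO]
      constructor
      · rintro ⟨⟨σ, hσ⟩, he⟩
        exact ⟨σ, hσ, he⟩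
      · rintro ⟨σ, hσ, he⟩
        exact ⟨⟨σ, hσ⟩, he⟩
    rw [← Set.ncard_coe_finset, ← this, ← Nat.card_coe_set_eq,
      Nat.card_congr (MulAction.orbitEquivQuotientStabilizer G S)]
    exact Subgroup.card_quotient_dvd_card _
  have hU : (Finset.powersetCard k (Finset.univ : Finset (Fin m))).card = m.choose k := by
    simp
  have hcard : ∀ T ∈ O, T.card = k := by
    intro T hT
    obtain ⟨σ, -, rfl⟩ := (hO T).1 hT
    rw [Finset.card_image_of_injective _ σ.injective, hS]
  have hsub : O ⊆ Finset.powersetCard k Finset.univ := fun T hT => by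
    simp [Finset.mem_powersetCard, hcard T hT]
  suffices hpO : p ∣ O.card from hpO.trans hOG
  have hcompl : ∀ T : Finset (Fin m), T.card = k → T ∈ O ∨ Tᶜ ∈ O := by
    intro T hT
    rcases lt_or_eq_of_le hk with h2 | h2
    · obtain ⟨σ, hσ, he⟩ := h.homog S T (by rw [hS, hT]) (by rwa [hS])
      exact Or.inl ((hO T).2 ⟨σ, h.le hσ, he⟩)
    · rcases h.half S T (by rw [hS, hT]) (by rwa [hS]) with ⟨σ, hσ, he⟩ | ⟨σ, hσ, -, he⟩
      · exact Or.inl ((hO T).2 ⟨σ, h.le hσ, he⟩)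
      · exact Or.inr ((hO _).2 ⟨σ, hσ, he⟩)
  by_cases hex : ∃ T ∈ O, Tᶜ ∈ O
  · obtain ⟨T, hT, hT'⟩ := hex
    have hcl : ∀ T' ∈ O, T'ᶜ ∈ O := by
      intro T' hT'1
      obtain ⟨σ, hσ, rfl⟩ := (hO T).1 hT
      obtain ⟨τ, hτ, rfl⟩ := (hO T').1 hT'1
      obtain ⟨ρ, hρ, he⟩ := (hO _).1 hT'
      refine (hO _).2 ⟨τ * σ⁻¹ * ρ, G.mul_mem (G.mul_mem hτ (G.inv_mem hσ)) hρ, ?_⟩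
      have : S.image ⇑(τ * σ⁻¹ * ρ) = (S.image ρ).image ⇑(τ * σ⁻¹) := by
        rw [Finset.image_image]; rfl
      rw [this, he, image_perm_compl, Finset.image_image]
      congr 1
      apply Finset.image_congr
      intro x _
      simp
    have : O = Finset.powersetCard k Finset.univ := by
      refine Finset.Subset.antisymm hsub fun T hT => ?_
      rcases hcompl T (Finset.mem_powersetCard.1 hT).2 with h1 | h1
      · exact h1
      · simpa using hcl _ h1
    rw [this, hU]
    exact hd
  · push Not at hex
    rcases lt_or_eq_of_le hk with h2 | h2
    · have : O = Finset.powersetCard k Finset.univ := by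
        refine Finset.Subset.antisymm hsub fun T hT => ?_
        obtain ⟨σ, hσ, he⟩ := h.homog S T (by rw [hS, (Finset.mem_powersetCard.1 hT).2])
          (by rwa [hS])
        exact (hO T).2 ⟨σ, h.le hσ, he⟩
      rw [this, hU]
      exact hd
    · have hinj : Function.Injective (fun T : Finset (Fin m) => Tᶜ) := compl_injective
      have hdis : Disjoint O (O.image (fun T => Tᶜ)) := by
        rw [Finset.disjoint_left]
        intro T hT hT'
        obtain ⟨T', hT'1, rfl⟩ := Finset.mem_image.1 hT'
        exact hex _ hT'1 hT
      have hun : O ∪ O.image (fun T => Tᶜ) = Finset.powersetCard k Finset.univ := by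
        ext T
        simp only [Finset.mem_union, Finset.mem_image, Finset.mem_powersetCard,
          Finset.subset_univ, true_and]
        constructor
        · rintro (hT | ⟨T', hT', rfl⟩)
          · exact hcard T hT
          · rw [Finset.card_compl, Fintype.card_fin, hcard T' hT']
            omega
        · intro hT
          rcases hcompl T hT with h1 | h1
          · exact Or.inl h1
          · exact Or.inr ⟨_, h1, compl_compl T⟩
      rw [← hU, ← hun, Finset.card_union_of_disjoint hdis, Finset.card_image_of_injective _ hinj,
        ← two_mul] at hd
      exact (Nat.Coprime.dvd_of_dvd_mul_left
        ((Nat.coprime_primes hp Nat.prime_two).2 hp2) hd)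

lemma exists_order (h : TransPair H G) {p k : ℕ} (hp : p.Prime) (hp2 : p ≠ 2)
    (hk : 2 * k ≤ m) (hd : p ∣ m.choose k) : ∃ c ∈ H, orderOf c = p := by
  have := Fact.mk hp
  obtain ⟨⟨c, hc⟩, ho⟩ := exists_prime_orderOf_dvd_card' p (h.prime_dvd_card hp hp2 hk hd)
  rw [Subgroup.orderOf_mk] at ho
  exact ⟨c, h.odd_mem hc (ho ▸ hp.odd_of_ne_two hp2), ho⟩

end TransPair

/-! ### Degree at least seven -/

/-- Below degree `2 * p` a Sylow `p`-subgroup of a permutation group has order `p`, so two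
subgroups of order `p` are conjugate. -/
lemma exists_conj_mem_zpowers {m p : ℕ} (hp : p.Prime) (hmp : m < 2 * p)
    (K : Subgroup (Equiv.Perm (Fin m))) {c d : Equiv.Perm (Fin m)} (hc : c ∈ K) (hd : d ∈ K)
    (hoc : orderOf c = p) (hod : orderOf d = p) :
    ∃ k ∈ K, k * d * k⁻¹ ∈ Subgroup.zpowers c := by
  have := Fact.mk hp
  have hcard : Nat.card K ∣ m.factorial := by
    have h1 := Subgroup.card_subgroup_dvd_card K
    rwa [Nat.card_eq_fintype_card (α := Equiv.Perm (Fin m)), Fintype.card_perm,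
      Fintype.card_fin] at h1
  have hv : (m.factorial).factorization p ≤ 1 := by
    have h2 : m < p ^ 2 := by nlinarith [hp.two_le]
    rw [Nat.factorization_def _ hp, padicValNat_factorial (b := 2)
      (Nat.log_lt_of_lt_pow' two_ne_zero h2)]
    simp
    exact Nat.lt_succ_iff.1 (Nat.div_lt_of_lt_mul (by omega))
  have hK0 : Nat.card K ≠ 0 := Nat.card_pos.ne'
  have hpK : p ∣ Nat.card K := by
    have := orderOf_dvd_natCard (⟨c, hc⟩ : K)
    rwa [Subgroup.orderOf_mk, hoc] at this
  have hvK : (Nat.card K).factorization p = 1 := by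
    apply le_antisymm
    · exact ((Nat.factorization_le_iff_dvd hK0 m.factorial_ne_zero).2 hcard p).trans hv
    · exact (hp.dvd_iff_one_le_factorization hK0).1 hpK
  let P : ∀ x ∈ K, orderOf x = p → Sylow p K := fun x hx ho =>
    Sylow.ofCard (Subgroup.zpowers ⟨x, hx⟩)
      (by rw [Nat.card_zpowers, Subgroup.orderOf_mk, ho, hvK, pow_one])
  obtain ⟨k, hk⟩ := MulAction.exists_smul_eq K (P d hd hod) (P c hc hoc)
  refine ⟨k, k.2, ?_⟩
  have h1 : (⟨d, hd⟩ : K) ∈ P d hd hod := Subgroup.mem_zpowers (⟨d, hd⟩ : K)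
  have h2 : k * ⟨d, hd⟩ * k⁻¹ ∈ P c hc hoc := by
    rw [← hk]
    exact Sylow.smul_def (G := K) ▸ Subgroup.smul_mem_pointwise_smul _ _ _ h1
  obtain ⟨n, hn⟩ := Subgroup.mem_zpowers_iff.1
    (show k * ⟨d, hd⟩ * k⁻¹ ∈ Subgroup.zpowers (⟨c, hc⟩ : K) from h2)
  refine Subgroup.mem_zpowers_iff.2 ⟨n, ?_⟩
  exact congrArg Subtype.val hn

/-- Given homomorphic images `w ^ i` and `w ^ j`, some word in them is trivial, and it can be
chosen with the second exponent odd, or the first odd and the second even. -/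
lemma exists_parity_relation (i j : ℤ) :
    ∃ x y : ℤ, i * x + j * y = 0 ∧ (Odd y ∨ (Odd x ∧ Even y)) := by
  by_cases hg : Int.gcd i j = 0
  · rw [Int.gcd_eq_zero_iff] at hg
    exact ⟨0, 1, by simp [hg.1, hg.2], Or.inl odd_one⟩
  · obtain ⟨g, i', j', hg0, hco, rfl, rfl⟩ := Int.exists_gcd_one' (Nat.pos_of_ne_zero hg)
    refine ⟨j', -i', by ring, ?_⟩
    rcases Int.even_or_odd i' with h1 | h1
    · right
      refine ⟨?_, h1.neg⟩
      by_contra h2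
      rw [Int.not_odd_iff_even] at h2
      have := Int.dvd_coe_gcd h1.two_dvd h2.two_dvd
      rw [hco] at this
      norm_num at this
    · exact Or.inl h1.neg

/-- Two permutations normalizing a subgroup of prime order induce powers of one automorphism of
it, since its automorphism group is cyclic; a suitable word in them centralizes it. -/
lemma exists_commute {ι : Type*} [Finite ι] {p : ℕ} (hp : p.Prime) {c a y : Equiv.Perm ι}
    (hc : orderOf c = p)
    (ha : a * c * a⁻¹ ∈ Subgroup.zpowers c) (hy : y * c * y⁻¹ ∈ Subgroup.zpowers c) :
    ∃ i j : ℤ, Commute (a ^ i * y ^ j) c ∧ (Odd j ∨ (Odd i ∧ Even j)) := by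
  have hfact := Fact.mk hp
  have hcard : Nat.card (Subgroup.zpowers c) = p := by rw [Nat.card_zpowers, hc]
  have hN : ∀ b : Equiv.Perm ι, b * c * b⁻¹ ∈ Subgroup.zpowers c →
      b ∈ Subgroup.normalizer (Subgroup.zpowers c : Set (Equiv.Perm ι)) := by
    intro b hb
    apply Subgroup.mem_normalizer_fintype
    intro n hn
    obtain ⟨k, rfl⟩ := Subgroup.mem_zpowers_iff.1 hn
    rw [← conj_zpow]
    exact Subgroup.zpow_mem _ hb k
  have : Fact (Nat.Prime (Nat.card (Subgroup.zpowers c))) := ⟨hcard ▸ hp⟩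
  have hcyc : IsCyclic (MulAut (Subgroup.zpowers c)) :=
    isCyclic_of_injective (IsCyclic.mulAutMulEquiv (Subgroup.zpowers c)).toMonoidHom
      (IsCyclic.mulAutMulEquiv (Subgroup.zpowers c)).injective
  obtain ⟨w, hw⟩ := hcyc.exists_generator
  let φ := (Subgroup.zpowers c).normalizerMonoidHom
  obtain ⟨i, hi⟩ := Subgroup.mem_zpowers_iff.1 (hw (φ ⟨a, hN a ha⟩))
  obtain ⟨j, hj⟩ := Subgroup.mem_zpowers_iff.1 (hw (φ ⟨y, hN y hy⟩))
  obtain ⟨u, v, huv, hpar⟩ := exists_parity_relation i j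
  refine ⟨u, v, ?_, hpar⟩
  have h1 : φ (⟨a, hN a ha⟩ ^ u * ⟨y, hN y hy⟩ ^ v) = 1 := by
    rw [map_mul, map_zpow, map_zpow, ← hi, ← hj, ← zpow_mul, ← zpow_mul, ← zpow_add, huv, zpow_zero]
  have h2 : (⟨a, hN a ha⟩ ^ u * ⟨y, hN y hy⟩ ^ v :
      Subgroup.normalizer (Subgroup.zpowers c : Set (Equiv.Perm ι))) ∈ φ.ker := h1
  rw [Subgroup.normalizerMonoidHom_ker, Subgroup.mem_subgroupOf] at h2
  exact (Subgroup.mem_centralizer_iff.1 h2 c (Subgroup.mem_zpowers c)).symm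

/-- A permutation commuting with a cycle and fixing every point outside its support is a power
of it. -/
lemma mem_zpowers_of_commute {ι : Type*} {c u : Equiv.Perm ι} (hc : c.IsCycle)
    (hu : ∀ x, c x = x → u x = x) (hcomm : Commute u c) : u ∈ Subgroup.zpowers c := by
  obtain ⟨x, hx, hxy⟩ := hc
  have hx' : c (u x) ≠ u x := by
    intro h1
    have : u (c x) = c (u x) := congrArg (fun f : Equiv.Perm ι => f x) hcomm.eq
    rw [h1] at this
    exact hx (u.injective this)
  obtain ⟨k, hk⟩ := hxy hx'
  refine Subgroup.mem_zpowers_iff.2 ⟨k, ?_⟩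
  ext y
  by_cases hy : c y = y
  · rw [hu y hy]
    exact Equiv.Perm.zpow_apply_eq_self_of_apply_eq_self hy k
  · obtain ⟨j, rfl⟩ := hxy hy
    have h2 : u ((c ^ j) x) = (c ^ j) (u x) :=
      congrArg (fun f : Equiv.Perm ι => f x) (hcomm.zpow_right j).eq
    have h3 : (c ^ k) ((c ^ j) x) = (c ^ j) ((c ^ k) x) :=
      congrArg (fun f : Equiv.Perm ι => f x) (Commute.zpow_zpow_self c k j).eq
    rw [h2, h3, hk]

namespace TransPair

variable {m : ℕ} {H G : Subgroup (Equiv.Perm (Fin m))}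

/-- A Frattini argument: an element of `G` preserving the fixed points of `c` can be corrected by
an element of `H` acting trivially there so as to normalize the group generated by `c`. -/
lemma exists_normalizing (h : TransPair H G) {p : ℕ} (hp : p.Prime) (hmp : m < 2 * p)
    {c g : Equiv.Perm (Fin m)} (hc : c ∈ H) (ho : orderOf c = p) (hg : g ∈ G)
    (hgF : ∀ x, c (g x) = g x ↔ c x = x) :
    ∃ k ∈ H, (∀ x, c x = x → k x = x) ∧ (k * g) * c * (k * g)⁻¹ ∈ Subgroup.zpowers c := by
  let K := H ⊓ fixingSubgroup (Equiv.Perm (Fin m)) {x | c x = x}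
  have hK : ∀ k, k ∈ K ↔ k ∈ H ∧ ∀ x, c x = x → k x = x := fun k =>
    and_congr_right fun _ => mem_fixingSubgroup_iff _
  obtain ⟨k, hk, hkc⟩ := exists_conj_mem_zpowers hp hmp K ((hK c).2 ⟨hc, fun _ hx => hx⟩)
    ((hK (g * c * g⁻¹)).2 ⟨h.conj_mem hg hc, fun x hx => by
      have := (hgF (g⁻¹ x)).1 (by simpa using hx)
      rw [Equiv.Perm.mul_apply, Equiv.Perm.mul_apply, this]
      exact g.apply_symm_apply x⟩) ho (by
        have := orderOf_injective (MulAut.conj g).toMonoidHom (MulAut.conj g).injective c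
        simpa [ho] using this)
  refine ⟨k, ((hK k).1 hk).1, ((hK k).1 hk).2, ?_⟩
  rw [mul_inv_rev]
  simpa only [mul_assoc] using hkc

/-- Jordan's criterion: `H` is primitive and contains a cycle of prime length `p`, so any
injection from at most `m - p + 1` points is induced by an element of `H`. -/
lemma exists_agree (h : TransPair H G) (hm : 5 ≤ m) {p : ℕ} (hp : p.Prime) (hpm : p < m)
    (hmp : m < 2 * p) {c : Equiv.Perm (Fin m)} (hc : c ∈ H) (ho : orderOf c = p)
    (F : Finset (Fin m)) (hF : F.card ≤ m - p + 1) (σ : Equiv.Perm (Fin m)) :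
    ∃ k ∈ H, ∀ x ∈ F, k x = σ x := by
  have hprim := h.isPreprimitive hm
  have hcyc : c.IsCycle :=
    Equiv.Perm.isCycle_of_prime_order' (ho ▸ hp) (by rwa [Fintype.card_fin, ho])
  have hsupp : c.support.card = p := by rw [← hcyc.orderOf, ho]
  have hncard : ((c.support : Set (Fin m))ᶜ).ncard = (m - p - 1) + 1 := by
    rw [← Finset.coe_compl, Set.ncard_coe_finset, Finset.card_compl, Fintype.card_fin, hsupp]
    omega
  have ht := Equiv.Perm.isPretransitive_of_isCycle_mem hcyc hc
  have hJ := hprim.isMultiplyPreprimitive hncard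
    (by have := hp.two_le; rw [Nat.card_eq_fintype_card, Fintype.card_fin]; omega)
    (MulAction.IsPreprimitive.of_prime_card (by
      classical
      convert! hp
      rw [← hsupp, Nat.card_eq_fintype_card, Fintype.card_subtype]
      apply congr_arg
      ext x
      simp [SubMulAction.mem_ofFixingSubgroup_iff]))
  have hJ' : MulAction.IsMultiplyPretransitive H (Fin m) (m - p - 1 + 2) := inferInstance
  have hn : MulAction.IsMultiplyPretransitive H (Fin m) F.card :=
    MulAction.isMultiplyPretransitive_of_le (n := m - p - 1 + 2) (by omega)
      (by have := hp.two_le; simp; omega)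
  let e : Fin F.card ↪ Fin m := (F.orderEmbOfFin rfl).toEmbedding
  obtain ⟨⟨k, hk⟩, he⟩ := MulAction.isMultiplyPretransitive_iff.1 hn e
    (e.trans σ.toEmbedding)
  refine ⟨k, hk, fun x hx => ?_⟩
  obtain ⟨i, rfl⟩ : x ∈ Set.range (F.orderEmbOfFin rfl) := by
    rw [Finset.range_orderEmbOfFin]; exact hx
  exact DFunLike.congr_fun he i

/-- With two fixed points of the `p`-cycle `c` available, a transposition of them either lies in
`G` or forces an element of `G` outside `H` to be a power of `c ∈ H`. -/
theorem eq_top_of_prime (h : TransPair H G) (hm : 5 ≤ m) {p : ℕ} (hp : p.Prime) (hpm : p + 2 ≤ m)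
    (hmp : m < 2 * p) {c : Equiv.Perm (Fin m)} (hc : c ∈ H) (ho : orderOf c = p) : G = ⊤ := by
  have hcyc : c.IsCycle :=
    Equiv.Perm.isCycle_of_prime_order' (ho ▸ hp) (by rwa [Fintype.card_fin, ho])
  have hsupp : c.support.card = p := by rw [← hcyc.orderOf, ho]
  have hFcard : c.supportᶜ.card = m - p := by
    rw [Finset.card_compl, Fintype.card_fin, hsupp]
  have hF : ∀ x, x ∈ c.supportᶜ ↔ c x = x := fun x => by simp
  have hagree := h.exists_agree hm hp (by omega) hmp hc ho c.supportᶜ (by omega)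
  obtain ⟨f₁, hf₁, f₂, hf₂, hne⟩ := Finset.one_lt_card.1 (show 1 < c.supportᶜ.card by omega)
  rw [hF] at hf₁ hf₂
  let s := Equiv.swap f₁ f₂
  have hsF : ∀ x, c x = x → c (s x) = s x := by
    intro x hx
    simp only [s, Equiv.swap_apply_def]
    split_ifs <;> assumption
  -- `y ∈ H` normalizes `⟨c⟩` and acts on the fixed points of `c` as `s`
  obtain ⟨y, hy, hys, hyc⟩ : ∃ y ∈ H, (∀ x, c x = x → y x = s x) ∧
      y * c * y⁻¹ ∈ Subgroup.zpowers c := by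
    obtain ⟨y₀, hy₀, hy₀s⟩ := hagree s
    have hy₀F : ∀ x, c x = x → y₀ x = s x := fun x hx => hy₀s x ((hF x).2 hx)
    obtain ⟨k, hk, hkF, hkc⟩ := h.exists_normalizing hp hmp hc ho (h.le hy₀) (fun x => by
      refine ⟨fun hx => ?_, fun hx => by rw [hy₀F x hx]; exact hsF x hx⟩
      have h1 : y₀ (s (y₀ x)) = y₀ x := by
        rw [hy₀F _ (hsF _ hx), Equiv.swap_apply_self]
      rw [← y₀.injective h1]
      exact hsF _ hx)
    exact ⟨k * y₀, H.mul_mem hk hy₀, fun x hx => by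
      rw [Equiv.Perm.mul_apply, hy₀F x hx, hkF _ (hsF x hx)], hkc⟩
  -- `a ∈ G` outside `H` normalizes `⟨c⟩` and fixes every fixed point of `c`
  obtain ⟨a, ha, haH, haF, hac⟩ : ∃ a ∈ G, a ∉ H ∧ (∀ x, c x = x → a x = x) ∧
      a * c * a⁻¹ ∈ Subgroup.zpowers c := by
    obtain ⟨b, hb, hbH⟩ := h.exists_notMem
    obtain ⟨b', hb', hbb'⟩ := hagree b
    have hF0 : ∀ x, c x = x → (b'⁻¹ * b) x = x := fun x hx => by
      rw [Equiv.Perm.mul_apply, ← hbb' x ((hF x).2 hx)]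
      exact b'.symm_apply_apply x
    obtain ⟨k, hk, hkF, hkc⟩ := h.exists_normalizing hp hmp hc ho
      (G.mul_mem (G.inv_mem (h.le hb')) hb) (fun x =>
        ⟨fun hx => (b'⁻¹ * b).injective (hF0 _ hx) ▸ hx, fun hx => by rwa [hF0 x hx]⟩)
    refine ⟨k * (b'⁻¹ * b), G.mul_mem (h.le hk) (G.mul_mem (G.inv_mem (h.le hb')) hb),
      fun hn => hbH ?_, fun x hx => by
        rw [Equiv.Perm.mul_apply, hF0 x hx, hkF x hx], hkc⟩
    exact (H.mul_mem_cancel_left (H.inv_mem hb')).1 ((H.mul_mem_cancel_left hk).1 hn)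
  obtain ⟨i, j, hcomm, hpar⟩ := exists_commute hp ho hac hyc
  let K := fixingSubgroup (Equiv.Perm (Fin m)) {x | c x = x}
  have hK : ∀ k, k ∈ K ↔ ∀ x, c x = x → k x = x := fun k => mem_fixingSubgroup_iff _
  have haK : a ∈ K := (hK a).2 haF
  have hyyK : y * y ∈ K := (hK _).2 fun x hx => by
    rw [Equiv.Perm.mul_apply, hys x hx, hys _ (hsF x hx), Equiv.swap_apply_self]
  have hmem : ∀ u ∈ K, Commute u c → u ∈ Subgroup.zpowers c := fun u hu =>
    mem_zpowers_of_commute hcyc ((hK u).1 hu)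
  have hcH : Subgroup.zpowers c ≤ H := by rwa [Subgroup.zpowers_le]
  rcases hpar with ⟨n, rfl⟩ | ⟨⟨n, rfl⟩, ⟨n', rfl⟩⟩
  · -- the word acts on the fixed points as `s`, so it is `s` times a power of `c`
    have hsc : Commute s c := by
      apply Equiv.Perm.Disjoint.commute
      intro x
      by_cases h1 : x = f₁
      · exact Or.inr (h1 ▸ hf₁)
      by_cases h2 : x = f₂
      · exact Or.inr (h2 ▸ hf₂)
      exact Or.inl (Equiv.swap_apply_of_ne_of_ne h1 h2)
    have hysK : y * s ∈ K := (hK _).2 fun x hx => by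
      rw [Equiv.Perm.mul_apply, hys _ (hsF x hx), Equiv.swap_apply_self]
    have hu := hmem (a ^ i * y ^ (2 * n + 1) * s) (by
      rw [zpow_add, zpow_mul, zpow_one, zpow_ofNat, pow_two, mul_assoc, mul_assoc]
      exact K.mul_mem (K.zpow_mem haK i) (K.mul_mem (K.zpow_mem hyyK n) hysK))
      (hcomm.mul_left hsc)
    have hsG : s ∈ G := (G.mul_mem_cancel_left
      (G.mul_mem (G.zpow_mem ha i) (G.zpow_mem (h.le hy) _))).1 (h.le (hcH hu))
    exact Equiv.Perm.subgroup_eq_top_of_isPreprimitive_of_isSwap_mem (h.isPreprimitive' hm) s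
      ⟨f₁, f₂, hne, rfl⟩ hsG
  · -- the word lies outside `H` but would be a power of `c`
    exfalso
    have hu := hmem (a ^ (2 * n + 1) * y ^ (n' + n')) (by
      rw [← two_mul, zpow_mul y, zpow_ofNat, pow_two]
      exact K.mul_mem (K.zpow_mem haK _) (K.zpow_mem hyyK _)) hcomm
    have h1 := (H.mul_mem_cancel_right (H.zpow_mem hy _)).1 (hcH hu)
    rw [zpow_add, zpow_mul, zpow_one, zpow_ofNat, pow_two] at h1
    exact haH ((H.mul_mem_cancel_left (H.zpow_mem (h.sq_mem ha) n)).1 h1)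

theorem eq_top_of_seven_le (h : TransPair H G) (hm : 7 ≤ m) : G = ⊤ := by
  obtain ⟨p, hp, h1, h2⟩ := exists_prime_window m hm
  obtain ⟨c, hc, ho⟩ := h.exists_order (k := m - p + 1) hp (by omega) (by omega) (by
    have := hp.dvd_choose_add (a := p - 1) (b := m - p + 1) (by omega) (by omega) (by omega)
    rwa [show p - 1 + (m - p + 1) = m by omega, ← Nat.choose_symm_of_eq_add
      (show m = (m - p + 1) + (p - 1) by omega)] at this)
  exact h.eq_top_of_prime (by omega) hp h1 (by omega) hc ho

end TransPair

/-! ### Degrees five and six -/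

/-- Letters of the words used for degrees `5` and `6`: `c` is a `5`-cycle in `H`, `a` an element
of `G` outside `H` normalizing it, and `t` another element of `H`. -/
inductive Letter
  | c | a | t
  deriving DecidableEq

/-- The composite of the maps named by a word, the leftmost letter being applied last. -/
def wordMap {ι : Type*} (c a t : ι → ι) : List Letter → ι → ι
  | [], x => x
  | .c :: l, x => c (wordMap c a t l x)
  | .a :: l, x => a (wordMap c a t l x)
  | .t :: l, x => t (wordMap c a t l x)

/-- The word moves at most three points, and either it moves some point or the letter `a` occurs
in it an odd number of times. -/
def IsShortWord {n : ℕ} (c a t : Fin n → Fin n) (l : List Letter) : Prop :=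
  (Finset.univ.filter fun x => wordMap c a t l x ≠ x).card ≤ 3 ∧
    ((∃ x, wordMap c a t l x ≠ x) ∨ l.count Letter.a % 2 = 1)

instance {n : ℕ} (c a t : Fin n → Fin n) (l : List Letter) : Decidable (IsShortWord c a t l) := by
  unfold IsShortWord; infer_instance

/-- The `5`-cycle `x ↦ x + 1` of the integers modulo `5`. -/
def c₅ : Equiv.Perm (Fin 5) := ⟨![1, 2, 3, 4, 0], ![4, 0, 1, 2, 3], by decide, by decide⟩

/-- The `5`-cycle `x ↦ x + 1` of the projective line over the field of order `5`; the point at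
infinity is `5`. -/
def c₆ : Equiv.Perm (Fin 6) := ⟨![1, 2, 3, 4, 0, 5], ![4, 0, 1, 2, 3, 5], by decide, by decide⟩

/-- The map `x ↦ 2 * x` of the projective line over the field of order `5`. -/
def i₆ : Equiv.Perm (Fin 6) := ⟨![0, 2, 4, 1, 3, 5], ![0, 3, 1, 4, 2, 5], by decide, by decide⟩

open Letter in
/-- Here `a` is multiplication by `2` modulo `5`, and `t` is any permutation carrying `{0, 1}` to
`{0, 2}`. -/
lemma shortWord_five_two : ∀ x₀ x₁ x₂ x₃ x₄ : Fin 5, [x₀, x₁, x₂, x₃, x₄].Nodup →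
    ({x₀, x₁} : Finset (Fin 5)) = {0, 2} →
    ∃ l ∈ [[t], [c, t], [t, a], [c, a, t], [t, t, t, a]],
      IsShortWord ![1, 2, 3, 4, 0] ![0, 2, 4, 1, 3] ![x₀, x₁, x₂, x₃, x₄] l := by
  decide +kernel

open Letter in
/-- Here `a` is negation modulo `5`, and `t` is any permutation carrying `{0, 1}` to `{0, 2}`. -/
lemma shortWord_five_four : ∀ x₀ x₁ x₂ x₃ x₄ : Fin 5, [x₀, x₁, x₂, x₃, x₄].Nodup →
    ({x₀, x₁} : Finset (Fin 5)) = {0, 2} →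
    ∃ l ∈ [[t], [c, t], [t, a], [c, t, t], [t, t, a], [c, c, t, t, a]],
      IsShortWord ![1, 2, 3, 4, 0] ![0, 4, 3, 2, 1] ![x₀, x₁, x₂, x₃, x₄] l := by
  decide +kernel

open Letter in
/-- Here `a` is negation on the projective line over the field of order `5`, and `t` is any
permutation interchanging `0` and the point at infinity. -/
lemma shortWord_six_four : ∀ x₁ x₂ x₃ x₄ : Fin 6, [5, x₁, x₂, x₃, x₄, 0].Nodup →
    ∃ l ∈ [[t], [t, t], [c, t], [t, a], [c, t, t], [t, t, a], [c, t, a], [c, a, t], [c, c, t, t],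
        [c, c, t, a], [c, c, a, t], [c, c, c, t, c, c, t, a, c, c, t],
        [c, c, t, c, c, t, c, t, a, c, t], [c, t, a, c, t, a, c, t, a],
        [c, c, c, t, c, c, t, a, c, t, c, t]],
      IsShortWord ![1, 2, 3, 4, 0, 5] ![0, 4, 3, 2, 1, 5] ![5, x₁, x₂, x₃, x₄, 0] l := by
  decide +kernel

open Letter in
/-- The two exceptions generate, together with `c₆`, a copy of `PSL(2, 5)`. -/
lemma shortWord_six_two : ∀ x₁ x₂ x₃ x₄ : Fin 6, [5, x₁, x₂, x₃, x₄, 0].Nodup →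
    (![5, x₁, x₂, x₃, x₄, 0] : Fin 6 → Fin 6) = ![5, 4, 2, 3, 1, 0] ∨
    (![5, x₁, x₂, x₃, x₄, 0] : Fin 6 → Fin 6) = ![5, 1, 3, 2, 4, 0] ∨
    ∃ l ∈ [[t], [t, t], [c, t], [t, a], [t, t, a], [t, a, a], [t, a, t, a], [t, t, t, a],
        [c, c, c, t, c, a, t, c, t], [c, c, t, c, t, a, c, t]],
      IsShortWord ![1, 2, 3, 4, 0, 5] ![0, 2, 4, 1, 3, 5] ![5, x₁, x₂, x₃, x₄, 0] l := by
  decide +kernel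

namespace TransPair

section general

variable {m : ℕ} {H G : Subgroup (Equiv.Perm (Fin m))}

/-- A word in `c`, `a`, `t` names an element of `G`; it lies in `H` exactly when `a` occurs evenly
often, because `H` has index two. -/
lemma exists_word (h : TransPair H G) {c a t : Equiv.Perm (Fin m)} (hc : c ∈ H) (ha : a ∈ G)
    (haH : a ∉ H) (ht : t ∈ H) (l : List Letter) :
    ∃ w ∈ G, (∀ x, w x = wordMap c a t l x) ∧ (w ∈ H ↔ l.count Letter.a % 2 = 0) := by
  induction l with
  | nil => exact ⟨1, G.one_mem, fun x => rfl, by simp [H.one_mem]⟩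
  | cons y l ih =>
    obtain ⟨w, hw, hwl, hwH⟩ := ih
    cases y
    · refine ⟨c * w, G.mul_mem (h.le hc) hw, fun x => ?_, ?_⟩
      · rw [Equiv.Perm.mul_apply, hwl]; rfl
      · rw [H.mul_mem_cancel_left hc, hwH, List.count_cons_of_ne (by decide)]
    · refine ⟨a * w, G.mul_mem ha hw, fun x => ?_, ?_⟩
      · rw [Equiv.Perm.mul_apply, hwl]; rfl
      · rw [List.count_cons_self]
        by_cases hwm : w ∈ H
        · rw [H.mul_mem_cancel_right hwm]
          have := hwH.1 hwm
          simp only [haH, false_iff]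
          omega
        · have h1 := h.mul_mem a ha w hw haH hwm
          rw [hwH] at hwm
          simp only [h1, true_iff]
          omega
    · refine ⟨t * w, G.mul_mem (h.le ht) hw, fun x => ?_, ?_⟩
      · rw [Equiv.Perm.mul_apply, hwl]; rfl
      · rw [H.mul_mem_cancel_left ht, hwH, List.count_cons_of_ne (by decide)]

lemma top_of_shortWord (h : TransPair H G) (hm : 5 ≤ m) {c a t : Equiv.Perm (Fin m)} (hc : c ∈ H)
    (ha : a ∈ G) (haH : a ∉ H) (ht : t ∈ H) {l : List Letter} (hl : IsShortWord c a t l) :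
    G = ⊤ := by
  obtain ⟨w, hw, hwl, hwH⟩ := h.exists_word hc ha haH ht l
  obtain ⟨h1, h2⟩ := hl
  refine h.top_of_support hm hw ?_ ?_
  · rintro rfl
    rcases h2 with ⟨x, hx⟩ | h2
    · exact hx (hwl x).symm
    · have := hwH.1 H.one_mem
      omega
  · have : w.support = Finset.univ.filter fun x => wordMap c a t l x ≠ x := by
      ext x
      simp [hwl]
    rwa [this]

/-- An element of `G` outside `H` normalizing `⟨c⟩`, normalized so as to fix a given point `z` of
the support of `c`. -/
lemma exists_affine (h : TransPair H G) {p : ℕ} (hp : p.Prime) (hmp : m < 2 * p)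
    {c : Equiv.Perm (Fin m)} (hc : c ∈ H) (ho : orderOf c = p) {z : Fin m} (hz : c z ≠ z)
    (hb : ∃ b ∈ G, b ∉ H ∧ ∀ x, c x = x → b x = x) :
    ∃ a ∈ G, a ∉ H ∧ (∀ x, c x = x → a x = x) ∧
      ∃ n < p, ∀ x : ℕ, a ((c ^ x) z) = (c ^ (n * x)) z := by
  have hcyc : c.IsCycle :=
    Equiv.Perm.isCycle_of_prime_order' (ho ▸ hp) (by rwa [Fintype.card_fin, ho])
  obtain ⟨b, hb, hbH, hbF⟩ := hb
  obtain ⟨k, hk, hkF, hkc⟩ := h.exists_normalizing hp hmp hc ho hb (fun x =>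
    ⟨fun hx => b.injective (hbF _ hx) ▸ hx, fun hx => by rwa [hbF x hx]⟩)
  have hdF : ∀ x, c x = x → (k * b) x = x := fun x hx => by
    rw [Equiv.Perm.mul_apply, hbF x hx, hkF x hx]
  have hdz : c ((k * b) z) ≠ (k * b) z := fun h1 => by
    rw [(k * b).injective (hdF _ h1)] at h1
    exact hz h1
  obtain ⟨j, hj⟩ := hcyc.exists_pow_eq hdz hz
  obtain ⟨n, hn, hnc⟩ : ∃ n < p, c ^ n = k * b * c * (k * b)⁻¹ := by
    obtain ⟨n, hn⟩ := mem_powers_iff_mem_zpowers.2 hkc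
    exact ⟨n % p, Nat.mod_lt _ hp.pos, by rw [← hn, ← ho]; exact pow_mod_orderOf c n⟩
  refine ⟨c ^ j * (k * b), G.mul_mem (G.pow_mem (h.le hc) _) (G.mul_mem (h.le hk) hb),
    fun hmem => hbH ?_, fun x hx => ?_, n, hn, fun x => ?_⟩
  · exact (H.mul_mem_cancel_left hk).1 ((H.mul_mem_cancel_left (H.pow_mem hc j)).1 hmem)
  · rw [Equiv.Perm.mul_apply, hdF x hx]
    exact Equiv.Perm.pow_apply_eq_self_of_apply_eq_self hx j
  · have h1 : k * b * c ^ x = c ^ (n * x) * (k * b) := by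
      rw [pow_mul, hnc, conj_pow]
      group
    have h2 : c ^ j * (k * b) * c ^ x = c ^ (n * x) * (c ^ j * (k * b)) := by
      rw [mul_assoc, h1, ← mul_assoc (c ^ j), ← mul_assoc (c ^ (n * x)), ← pow_add, ← pow_add,
        add_comm j]
    have := congrArg (fun f : Equiv.Perm (Fin m) => f z) h2
    simp only [Equiv.Perm.mul_apply] at this hj
    rw [Equiv.Perm.mul_apply, Equiv.Perm.mul_apply, this, hj]

/-- Up to relabelling the coordinates, `H` contains any prescribed `5`-cycle. -/
lemma exists_conj_mem (hm : m < 10) (hd : ∃ c ∈ H, orderOf c = 5)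
    {c₀ : Equiv.Perm (Fin m)} (hc₀ : orderOf c₀ = 5) :
    ∃ π : Equiv.Perm (Fin m), c₀ ∈ H.comap (MulAut.conj π).toMonoidHom := by
  have hcyc : ∀ c : Equiv.Perm (Fin m), orderOf c = 5 → c.IsCycle := fun c hc =>
    Equiv.Perm.isCycle_of_prime_order' (by rw [hc]; norm_num) (by rw [Fintype.card_fin, hc]; omega)
  obtain ⟨c, hc, ho⟩ := hd
  have h1 : IsConj c₀ c := ((hcyc c₀ hc₀).isConj_iff (hcyc c ho)).2 (by
    rw [← (hcyc c₀ hc₀).orderOf, ← (hcyc c ho).orderOf, hc₀, ho])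
  obtain ⟨π, hπ⟩ := isConj_iff.1 h1
  exact ⟨π, by rw [Subgroup.mem_comap]; simpa [hπ] using hc⟩

end general

lemma orderOf_c₅ : orderOf c₅ = 5 :=
  have := Fact.mk Nat.prime_five
  orderOf_eq_prime (by decide +kernel) (by decide +kernel)

lemma orderOf_c₆ : orderOf c₆ = 5 :=
  have := Fact.mk Nat.prime_five
  orderOf_eq_prime (by decide +kernel) (by decide +kernel)

lemma eq_top_of_five_aux {H G : Subgroup (Equiv.Perm (Fin 5))} (h : TransPair H G)
    (hc : c₅ ∈ H) : G = ⊤ := by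
  obtain ⟨a₀, ha₀, ha₀H, -, n, hn, hna⟩ := h.exists_affine Nat.prime_five (by norm_num) hc
    orderOf_c₅ (z := 0) (by decide) (by
      obtain ⟨b, hb, hbH⟩ := h.exists_notMem
      exact ⟨b, hb, hbH, fun x hx => absurd hx (by revert x; decide)⟩)
  have hmaps : ∃ a ∈ G, a ∉ H ∧ (⇑a = ![0, 2, 4, 1, 3] ∨ ⇑a = ![0, 4, 3, 2, 1]) := by
    have h0 : a₀ 0 = (c₅ ^ (n * 0)) 0 := hna 0
    have h1 : a₀ 1 = (c₅ ^ (n * 1)) 0 := hna 1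
    have h2 : a₀ 2 = (c₅ ^ (n * 2)) 0 := hna 2
    have h3 : a₀ 3 = (c₅ ^ (n * 3)) 0 := hna 3
    have h4 : a₀ 4 = (c₅ ^ (n * 4)) 0 := hna 4
    interval_cases n
    · exact absurd (a₀.injective (h0.trans h1.symm)) (by decide)
    · refine absurd ?_ ha₀H
      have : a₀ = 1 := by
        ext x; fin_cases x
        exacts [congrArg _ h0, congrArg _ h1, congrArg _ h2, congrArg _ h3, congrArg _ h4]
      rw [this]
      exact H.one_mem
    · refine ⟨a₀, ha₀, ha₀H, Or.inl ?_⟩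
      ext x; fin_cases x
      exacts [congrArg _ h0, congrArg _ h1, congrArg _ h2, congrArg _ h3, congrArg _ h4]
    · refine ⟨a₀⁻¹, G.inv_mem ha₀, fun hn => ha₀H (inv_mem_iff.1 hn), Or.inl ?_⟩
      ext x; fin_cases x <;> refine congrArg _ (Equiv.Perm.inv_eq_iff_eq.2 ?_)
      exacts [h0.symm, h2.symm, h4.symm, h1.symm, h3.symm]
    · refine ⟨a₀, ha₀, ha₀H, Or.inr ?_⟩
      ext x; fin_cases x
      exacts [congrArg _ h0, congrArg _ h1, congrArg _ h2, congrArg _ h3, congrArg _ h4]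
  obtain ⟨a, ha, haH, hcase⟩ := hmaps
  obtain ⟨t, ht, hti⟩ := h.homog {0, 1} {0, 2} (by decide) (by decide)
  have hc' : ⇑c₅ = ![1, 2, 3, 4, 0] := rfl
  have ht' : ⇑t = ![t 0, t 1, t 2, t 3, t 4] := by
    ext x; fin_cases x <;> rfl
  have hnd : [t 0, t 1, t 2, t 3, t 4].Nodup :=
    List.Nodup.map t.injective (l := [0, 1, 2, 3, 4]) (by decide)
  have hti' : ({t 0, t 1} : Finset (Fin 5)) = {0, 2} := by
    rw [← hti]; simp
  rcases hcase with hcase | hcase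
  · obtain ⟨l, -, hl⟩ := shortWord_five_two _ _ _ _ _ hnd hti'
    rw [← hc', ← ht', ← hcase] at hl
    exact h.top_of_shortWord (by norm_num) hc ha haH ht hl
  · obtain ⟨l, -, hl⟩ := shortWord_five_four _ _ _ _ _ hnd hti'
    rw [← hc', ← ht', ← hcase] at hl
    exact h.top_of_shortWord (by norm_num) hc ha haH ht hl

theorem eq_top_of_five {H G : Subgroup (Equiv.Perm (Fin 5))} (h : TransPair H G) : G = ⊤ := by
  obtain ⟨π, hπ⟩ := exists_conj_mem (by norm_num)
    (h.exists_order (k := 2) Nat.prime_five (by norm_num) (by norm_num) (by decide)) orderOf_c₅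
  exact top_of_conj ((h.conj π).eq_top_of_five_aux hπ)

/-- Ten triples of points of the projective line over the field of order `5`, one from each
complementary pair; they form an orbit of `PSL(2, 5)`. -/
def triples : Finset (Finset (Fin 6)) :=
  {{5, 0, 1}, {5, 1, 2}, {5, 2, 3}, {5, 3, 4}, {5, 4, 0},
    {0, 1, 3}, {1, 2, 4}, {2, 3, 0}, {3, 4, 1}, {4, 0, 2}}

/-- In the exceptional case of degree `6`, the permutations of `H` interchanging `5` and `0` are
so few that `H` preserves `triples`, against the transitivity on triples up to complements. -/
lemma false_of_exceptional {H G : Subgroup (Equiv.Perm (Fin 6))} (h : TransPair H G)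
    (hc : c₆ ∈ H) (hi : i₆ ∈ G) (hiH : i₆ ∉ H)
    (hex : ∀ t ∈ H, t 5 = 0 → t 0 = 5 → ⇑t = ![5, 4, 2, 3, 1, 0] ∨ ⇑t = ![5, 1, 3, 2, 4, 0]) :
    False := by
  let P : Equiv.Perm (Fin 6) → Prop := fun g => ∀ U ∈ triples, U.image g ∈ triples
  have hPmul : ∀ g g', P g → P g' → P (g * g') := by
    intro g g' hg hg' U hU
    have := hg _ (hg' U hU)
    rwa [Finset.image_image] at this
  have hPc : ∀ k : ℕ, P (c₆ ^ k) := by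
    intro k
    induction k with
    | zero => intro U hU; simpa using hU
    | succ k ih =>
      rw [pow_succ]
      refine hPmul _ _ ih ?_
      change ∀ U ∈ triples, U.image ![1, 2, 3, 4, 0, 5] ∈ triples
      decide +kernel
  have hPinv : ∀ k : ℕ, P (c₆ ^ k)⁻¹ := by
    intro k
    rw [← inv_pow, show (c₆)⁻¹ = c₆ ^ 4 from by decide +kernel, ← pow_mul]
    exact hPc _
  have hPt : ∀ t ∈ H, t 5 = 0 → t 0 = 5 → P t := by
    intro t ht h5 h0
    simp only [P]
    rcases hex t ht h5 h0 with he | he <;> rw [he] <;> decide +kernel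
  have hinv : ∀ t ∈ H, t 5 = 0 → t 0 = 5 → t⁻¹ = t := by
    intro t ht h5 h0
    have : ∀ x, t (t x) = x := by
      rcases hex t ht h5 h0 with he | he <;> rw [he] <;> decide
    rw [inv_eq_iff_mul_eq_one]
    ext x
    simp [this]
  have hc0 : ∀ y : Fin 6, y ≠ 5 → ∃ k < 5, (c₆ ^ k) y = 0 := by decide +kernel
  have hc0' : ∀ y : Fin 6, y ≠ 5 → ∃ k < 5, (c₆ ^ k) 0 = y := by decide +kernel
  have hc5 : ∀ k : ℕ, (c₆ ^ k) 5 = 5 := fun k =>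
    Equiv.Perm.pow_apply_eq_self_of_apply_eq_self rfl k
  obtain ⟨t, ht, htF⟩ := h.exists_agree (by norm_num) Nat.prime_five (by norm_num) (by norm_num) hc
    orderOf_c₆ {5, 0} (by decide) (Equiv.swap 5 0)
  have ht5 : t 5 = 0 := htF 5 (by simp)
  have ht0 : t 0 = 5 := htF 0 (by simp)
  have hPH : ∀ g ∈ H, P g := by
    intro g hg
    by_cases h5 : g 5 = 5
    · have h0 : g 0 ≠ 5 := fun h0 => absurd (g.injective (h0.trans h5.symm)) (by decide)
      obtain ⟨k, -, hk⟩ := hc0 _ h0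
      have h1 := hPt (c₆ ^ k * g * t) (H.mul_mem (H.mul_mem (H.pow_mem hc k) hg) ht)
        (by simp [ht5, hk]) (by simp [ht0, h5, hc5])
      have h2 := hPmul _ _ (hPinv k) (hPmul _ _ h1 (hPt t ht ht5 ht0))
      have htt : t * t = 1 := by
        nth_rewrite 1 [← hinv t ht ht5 ht0]
        exact inv_mul_cancel t
      rwa [mul_assoc (c₆ ^ k * g) t t, htt, mul_one, inv_mul_cancel_left] at h2
    · obtain ⟨k, -, hk⟩ := hc0 _ h5
      have h3 : g⁻¹ ((c₆ ^ k)⁻¹ 5) ≠ 5 := by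
        intro h3
        rw [Equiv.Perm.inv_eq_iff_eq, Equiv.Perm.inv_eq_iff_eq, hk] at h3
        exact absurd h3 (by decide)
      obtain ⟨j, -, hj⟩ := hc0' _ h3
      have h1 := hPt (c₆ ^ k * g * c₆ ^ j)
        (H.mul_mem (H.mul_mem (H.pow_mem hc k) hg) (H.pow_mem hc j))
        (by simp only [Equiv.Perm.mul_apply, hc5, hk])
        (by simp only [Equiv.Perm.mul_apply, hj]; simp)
      have h2 := hPmul _ _ (hPmul _ _ (hPinv k) h1) (hPinv j)
      convert h2 using 1
      group
  have hi' : ∀ U ∈ triples, (U.image i₆)ᶜ ∈ triples := by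
    change ∀ U ∈ triples, (U.image ![0, 2, 4, 1, 3, 5])ᶜ ∈ triples
    decide +kernel
  have hT : ({0, 1, 2} : Finset (Fin 6)) ∉ triples := by decide +kernel
  rcases h.half {5, 0, 1} {0, 1, 2} (by decide) (by decide) with ⟨σ, hσ, he⟩ | ⟨σ, hσ, hσH, he⟩
  · exact hT (he ▸ hPH σ hσ _ (by decide +kernel))
  · have h1 := h.mul_mem _ (G.inv_mem hi) _ hσ (fun hn => hiH (inv_mem_iff.1 hn)) hσH
    have h2 := hi' _ (hPH _ h1 {5, 0, 1} (by decide +kernel))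
    have h3 : ⇑i₆ ∘ ⇑(i₆⁻¹ * σ) = σ := by ext x; simp
    rw [Finset.image_image, h3, he, compl_compl] at h2
    exact hT h2

lemma eq_top_of_six_aux {H G : Subgroup (Equiv.Perm (Fin 6))} (h : TransPair H G)
    (hc : c₆ ∈ H) : G = ⊤ := by
  have hfix : ∀ x, c₆ x = x → x = 5 := by decide
  obtain ⟨a₀, ha₀, ha₀H, ha₀F, n, hn, hna⟩ := h.exists_affine Nat.prime_five (by norm_num) hc
    orderOf_c₆ (z := 0) (by decide) (by
      obtain ⟨b, hb, hbH⟩ := h.exists_notMem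
      obtain ⟨σ, hσ, he⟩ := h.homog {b 5} {5} (by simp) (by simp)
      refine ⟨σ * b, G.mul_mem (h.le hσ) hb, fun hn => hbH ((H.mul_mem_cancel_left hσ).1 hn),
        fun x hx => ?_⟩
      rw [hfix x hx]
      simpa using he)
  have hmaps : ∃ a ∈ G, a ∉ H ∧ (⇑a = ![0, 2, 4, 1, 3, 5] ∨ ⇑a = ![0, 4, 3, 2, 1, 5]) := by
    have h0 : a₀ 0 = (c₆ ^ (n * 0)) 0 := hna 0
    have h1 : a₀ 1 = (c₆ ^ (n * 1)) 0 := hna 1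
    have h2 : a₀ 2 = (c₆ ^ (n * 2)) 0 := hna 2
    have h3 : a₀ 3 = (c₆ ^ (n * 3)) 0 := hna 3
    have h4 : a₀ 4 = (c₆ ^ (n * 4)) 0 := hna 4
    have h5 : a₀ 5 = 5 := ha₀F 5 rfl
    interval_cases n
    · exact absurd (a₀.injective (h0.trans h1.symm)) (by decide)
    · refine absurd ?_ ha₀H
      have : a₀ = 1 := by
        ext x; fin_cases x
        exacts [congrArg _ h0, congrArg _ h1, congrArg _ h2, congrArg _ h3, congrArg _ h4,
          congrArg _ h5]
      rw [this]
      exact H.one_mem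
    · refine ⟨a₀, ha₀, ha₀H, Or.inl ?_⟩
      ext x; fin_cases x
      exacts [congrArg _ h0, congrArg _ h1, congrArg _ h2, congrArg _ h3, congrArg _ h4,
        congrArg _ h5]
    · refine ⟨a₀⁻¹, G.inv_mem ha₀, fun hn => ha₀H (inv_mem_iff.1 hn), Or.inl ?_⟩
      ext x; fin_cases x <;> refine congrArg _ (Equiv.Perm.inv_eq_iff_eq.2 ?_)
      exacts [h0.symm, h2.symm, h4.symm, h1.symm, h3.symm, h5.symm]
    · refine ⟨a₀, ha₀, ha₀H, Or.inr ?_⟩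
      ext x; fin_cases x
      exacts [congrArg _ h0, congrArg _ h1, congrArg _ h2, congrArg _ h3, congrArg _ h4,
        congrArg _ h5]
  obtain ⟨a, ha, haH, hcase⟩ := hmaps
  have hc' : ⇑c₆ = ![1, 2, 3, 4, 0, 5] := rfl
  have htm : ∀ t : Equiv.Perm (Fin 6), t 5 = 0 → t 0 = 5 →
      ⇑t = ![5, t 1, t 2, t 3, t 4, 0] := by
    intro t h5 h0
    ext x; fin_cases x
    exacts [congrArg _ h0, rfl, rfl, rfl, rfl, congrArg _ h5]
  have hnd : ∀ t : Equiv.Perm (Fin 6), t 5 = 0 → t 0 = 5 →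
      [5, t 1, t 2, t 3, t 4, 0].Nodup := by
    intro t h5 h0
    have := List.Nodup.map t.injective (l := [0, 1, 2, 3, 4, 5]) (by decide)
    simpa only [List.map, h5, h0] using this
  rcases hcase with hcase | hcase
  · by_contra hG
    have hai : a = i₆ := DFunLike.coe_injective hcase
    refine h.false_of_exceptional hc (hai ▸ ha) (hai ▸ haH) fun t ht h5 h0 => ?_
    rcases shortWord_six_two _ _ _ _ (hnd t h5 h0) with h1 | h1 | ⟨l, -, hl⟩
    · exact Or.inl ((htm t h5 h0).trans h1)
    · exact Or.inr ((htm t h5 h0).trans h1)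
    · rw [← hc', ← htm t h5 h0, ← hcase] at hl
      exact absurd (h.top_of_shortWord (by norm_num) hc ha haH ht hl) hG
  · obtain ⟨t, ht, htF⟩ := h.exists_agree (by norm_num) Nat.prime_five (by norm_num) (by norm_num)
      hc orderOf_c₆ {5, 0} (by decide) (Equiv.swap 5 0)
    have h5 : t 5 = 0 := htF 5 (by simp)
    have h0 : t 0 = 5 := htF 0 (by simp)
    obtain ⟨l, -, hl⟩ := shortWord_six_four _ _ _ _ (hnd t h5 h0)
    rw [← hc', ← htm t h5 h0, ← hcase] at hl
    exact h.top_of_shortWord (by norm_num) hc ha haH ht hl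

theorem eq_top_of_six {H G : Subgroup (Equiv.Perm (Fin 6))} (h : TransPair H G) : G = ⊤ := by
  obtain ⟨π, hπ⟩ := exists_conj_mem (by norm_num)
    (h.exists_order (k := 2) Nat.prime_five (by norm_num) (by norm_num) (by decide)) orderOf_c₆
  exact top_of_conj ((h.conj π).eq_top_of_six_aux hπ)

theorem eq_top {m : ℕ} (hm : 5 ≤ m) {H G : Subgroup (Equiv.Perm (Fin m))} (h : TransPair H G) :
    G = ⊤ := by
  obtain rfl | rfl | h7 : m = 5 ∨ m = 6 ∨ 7 ≤ m := by omega
  · exact h.eq_top_of_five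
  · exact h.eq_top_of_six
  · exact h.eq_top_of_seven_le h7

end TransPair

/-! ### Codes whose minimum distance equals their length -/

lemma exists_agree_apply {m : ℕ} {Q : Type*} {x : Equiv.Perm (Fin m → Q)} (hx : x ∈ AutG m Q)
    {δ γ : Fin m → Q} (h : ∃ i, δ i = γ i) : ∃ i, x δ i = x γ i := by
  obtain ⟨g, σ, rfl⟩ := hx
  obtain ⟨i, hi⟩ := h
  exact ⟨σ i, by simp [hi]⟩

section Codes

variable {m : ℕ} {Q : Type*} [DecidableEq Q] {C : Set (Fin m → Q)}
  {X : Subgroup (Equiv.Perm (Fin m → Q))}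

lemma distTo_le {β : Fin m → Q} (hβ : β ∈ C) (γ : Fin m → Q) : distTo C γ ≤ hammingDist γ β :=
  Nat.sInf_le ⟨β, hβ, rfl⟩

lemma exists_distTo (hne : C.Nonempty) (γ : Fin m → Q) :
    ∃ β ∈ C, hammingDist γ β = distTo C γ := by
  obtain ⟨β, hβ⟩ := hne
  exact Nat.sInf_mem (s := {d | ∃ β ∈ C, hammingDist γ β = d}) ⟨_, β, hβ, rfl⟩

lemma distTo_eq_zero (hne : C.Nonempty) {γ : Fin m → Q} : distTo C γ = 0 ↔ γ ∈ C := by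
  refine ⟨fun h => ?_, fun h => ?_⟩
  · obtain ⟨β, hβ, hd⟩ := exists_distTo hne γ
    rw [h, hammingDist_eq_zero] at hd
    exact hd ▸ hβ
  · have := distTo_le h γ
    rwa [hammingDist_self, Nat.le_zero] at this

lemma IsCT.exists_apply_eq (hCT : IsCT C X) (hne : C.Nonempty) {γ γ' : Fin m → Q}
    (h : distTo C γ = distTo C γ') : ∃ x ∈ X, x γ = γ' := by
  have hle : distTo C γ ≤ covRad C := by
    refine le_csSup ⟨m, ?_⟩ ⟨γ, rfl⟩
    rintro _ ⟨δ, rfl⟩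
    obtain ⟨β, -, hd⟩ := exists_distTo hne δ
    rw [← hd]
    exact hammingDist_le_card_fintype.trans_eq (Fintype.card_fin m)
  obtain ⟨ε, hε⟩ := hCT _ hle
  have h1 : γ ∈ cell C (distTo C γ) := rfl
  have h2 : γ' ∈ cell C (distTo C γ) := h.symm
  rw [hε] at h1 h2
  obtain ⟨x, hx, rfl⟩ := h1
  obtain ⟨y, hy, rfl⟩ := h2
  exact ⟨y * x⁻¹, X.mul_mem hy (X.inv_mem hx), by simp⟩

lemma IsCT.apply_mem (hCT : IsCT C X) (hne : C.Nonempty) {x : Equiv.Perm (Fin m → Q)}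
    (hx : x ∈ X) {α : Fin m → Q} (hα : α ∈ C) : x α ∈ C := by
  obtain ⟨ε, hε⟩ := hCT 0 (Nat.zero_le _)
  rw [← distTo_eq_zero hne] at hα ⊢
  have h1 : α ∈ cell C 0 := hα
  rw [hε] at h1
  obtain ⟨y, hy, rfl⟩ := h1
  change x (y ε) ∈ cell C 0
  rw [hε]
  exact ⟨x * y, X.mul_mem hx hy, rfl⟩

lemma IsMinDist.apply_ne (hδ : IsMinDist C m) {α β : Fin m → Q} (hα : α ∈ C) (hβ : β ∈ C)
    (hne : α ≠ β) (i : Fin m) : α i ≠ β i := by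
  have h1 : m ≤ hammingDist α β := hδ.2 ⟨α, hα, β, hβ, hne, rfl⟩
  have h2 : (Finset.univ.filter fun i => α i ≠ β i) = Finset.univ := by
    apply Finset.eq_univ_of_card
    exact le_antisymm (Finset.card_le_univ _) ((Fintype.card_fin m).trans_le h1)
  have := Finset.mem_univ i
  rw [← h2] at this
  exact (Finset.mem_filter.1 this).2

lemma IsMinDist.eq_of_apply_eq (hδ : IsMinDist C m) {α β : Fin m → Q} (hα : α ∈ C) (hβ : β ∈ C)
    {i : Fin m} (h : α i = β i) : α = β :=
  by_contra fun hne => hδ.apply_ne hα hβ hne i h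

/-- Since distinct codewords differ everywhere, a vertex differing from the codeword `α` in at
most half of the coordinates has no codeword nearer than `α`. -/
lemma IsMinDist.distTo_eq_card (hδ : IsMinDist C m) {α γ : Fin m → Q} (hα : α ∈ C)
    {S : Finset (Fin m)} (hS : ∀ i, γ i ≠ α i ↔ i ∈ S) (hcard : 2 * S.card ≤ m) :
    distTo C γ = S.card := by
  have h1 : hammingDist γ α = S.card := by
    unfold hammingDist
    congr 1
    ext i
    simp [← hS]
  refine le_antisymm ((distTo_le hα γ).trans_eq h1) ?_
  obtain ⟨β, hβ, hd⟩ := exists_distTo ⟨α, hα⟩ γ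
  rw [← hd]
  rcases eq_or_ne α β with rfl | hne
  · exact h1.ge
  · have h2 : Sᶜ ⊆ Finset.univ.filter fun i => γ i ≠ β i := by
      intro i hi
      have h3 : γ i = α i := by
        by_contra h3
        exact Finset.mem_compl.1 hi ((hS i).1 h3)
      simpa [h3] using hδ.apply_ne hα hβ hne i
    have h4 := Finset.card_le_card h2
    rw [Finset.card_compl, Fintype.card_fin] at h4
    change _ ≤ hammingDist γ β at h4
    omega

/-- Transitivity on `C_1`: if `v` did not occur in position `i`, then changing the `i`-th entry of
`α` to `v` would give a vertex agreeing somewhere with one codeword only, whereas changing it to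
the entry of another codeword gives a vertex agreeing with two. -/
lemma IsCT.exists_codeword_apply_eq (hm : 5 ≤ m) (hX : X ≤ AutG m Q) (hCT : IsCT C X)
    (hδ : IsMinDist C m) (i : Fin m) (v : Q) : ∃ β ∈ C, β i = v := by
  obtain ⟨α, hα, β, hβ, hne, -⟩ := hδ.1
  by_contra! hv
  have hd : ∀ w, w ≠ α i → distTo C (Function.update α i w) = 1 := by
    intro w hw
    rw [← Finset.card_singleton i]
    apply hδ.distTo_eq_card hα
    · intro j
      rcases eq_or_ne j i with rfl | hj <;> simp [*]
    · rw [Finset.card_singleton]; omega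
  obtain ⟨x, hx, hxe⟩ := hCT.exists_apply_eq ⟨α, hα⟩
    ((hd (β i) (hδ.apply_ne hα hβ hne i).symm).trans (hd v (hv α hα).symm).symm)
  have key : ∀ ε ∈ C, (∃ j, ε j = Function.update α i (β i) j) → x ε = α := by
    intro ε hε h
    obtain ⟨j, hj⟩ := exists_agree_apply (hX hx) h
    have hxε := hCT.apply_mem ⟨α, hα⟩ hx hε
    rw [hxe] at hj
    rcases eq_or_ne j i with rfl | hji
    · rw [Function.update_self] at hj
      exact absurd hj (hv _ hxε)
    · rw [Function.update_of_ne hji] at hj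
      exact hδ.eq_of_apply_eq hxε hα hj
  have : Nontrivial (Fin m) := Fin.nontrivial_iff_two_le.2 (by omega)
  obtain ⟨j, hj⟩ := exists_ne i
  exact hne (x.injective ((key α hα ⟨j, by simp [hj]⟩).trans (key β hβ ⟨i, by simp⟩).symm))

/-- Transitivity on `C_2`: with a third codeword `ε`, the vertex obtained from `α` by taking one
entry from `β` and one from `ε` agrees somewhere with three codewords, whereas the one obtained by
taking two entries from `β` agrees with only two. -/
lemma IsCT.eq_or_eq (hm : 5 ≤ m) (hX : X ≤ AutG m Q) (hCT : IsCT C X) (hδ : IsMinDist C m)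
    {α β : Fin m → Q} (hα : α ∈ C) (hβ : β ∈ C) (hne : α ≠ β) {ε : Fin m → Q} (hε : ε ∈ C) :
    ε = α ∨ ε = β := by
  by_contra! hn
  obtain ⟨hεα, hεβ⟩ := hn
  let i : Fin m := ⟨0, by omega⟩
  let j : Fin m := ⟨1, by omega⟩
  let k : Fin m := ⟨2, by omega⟩
  have hij : i ≠ j := by simp [i, j]
  have hki : k ≠ i := by simp [i, k]
  have hkj : k ≠ j := by simp [j, k]
  let v : Q → Fin m → Q := fun w => Function.update (Function.update α i (β i)) j w
  have hvi : ∀ w, v w i = β i := fun w => by simp [v, hij]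
  have hvj : ∀ w, v w j = w := fun w => by simp [v]
  have hv : ∀ w l, l ≠ i → l ≠ j → v w l = α l := fun w l h1 h2 => by simp [v, h1, h2]
  have hd : ∀ w, w ≠ α j → distTo C (v w) = 2 := by
    intro w hw
    rw [← Finset.card_pair hij]
    apply hδ.distTo_eq_card hα
    · intro l
      rcases eq_or_ne l i with rfl | hi
      · simpa [hvi] using (hδ.apply_ne hα hβ hne _).symm
      · rcases eq_or_ne l j with rfl | hj
        · simpa [hvj] using hw
        · simp [hv _ l hi hj, hi, hj]
    · rw [Finset.card_pair hij]; omega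
  obtain ⟨x, hx, hxe⟩ := hCT.exists_apply_eq ⟨α, hα⟩
    ((hd (ε j) (hδ.apply_ne hε hα hεα j)).trans (hd (β j) (hδ.apply_ne hα hβ hne j).symm).symm)
  have key : ∀ ζ ∈ C, (∃ l, ζ l = v (ε j) l) → x ζ = α ∨ x ζ = β := by
    intro ζ hζ h
    obtain ⟨l, hl⟩ := exists_agree_apply (hX hx) h
    have hxζ := hCT.apply_mem ⟨α, hα⟩ hx hζ
    rw [hxe] at hl
    rcases eq_or_ne l i with rfl | hi
    · rw [hvi] at hl
      exact Or.inr (hδ.eq_of_apply_eq hxζ hβ hl)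
    · rcases eq_or_ne l j with rfl | hj
      · rw [hvj] at hl
        exact Or.inr (hδ.eq_of_apply_eq hxζ hβ hl)
      · rw [hv _ l hi hj] at hl
        exact Or.inl (hδ.eq_of_apply_eq hxζ hα hl)
  have hα' := key α hα ⟨k, (hv _ k hki hkj).symm⟩
  have hβ' := key β hβ ⟨i, (hvi _).symm⟩
  have hε' := key ε hε ⟨j, (hvj _).symm⟩
  have h1 : x α ≠ x β := x.injective.ne hne
  have h2 : x ε ≠ x α := x.injective.ne hεα
  have h3 : x ε ≠ x β := x.injective.ne hεβ
  grind

end Codes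

section Binary

variable {m : ℕ} {Q : Type*} {α β : Fin m → Q}

/-- The vertex agreeing with `β` on `S` and with `α` off `S`. -/
def blend (α β : Fin m → Q) (S : Finset (Fin m)) : Fin m → Q :=
  fun i => if i ∈ S then β i else α i

lemma blend_injective (h : ∀ i, α i ≠ β i) : Function.Injective (blend α β) := by
  intro S T hST
  ext i
  have h1 := congrFun hST i
  have h2 := h i
  unfold blend at h1
  by_cases hS : i ∈ S <;> by_cases hT : i ∈ T <;> simp_all [eq_comm]

lemma mem_image_perm {ι : Type*} [DecidableEq ι] {S : Finset ι} {σ : Equiv.Perm ι} {i : ι} :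
    i ∈ S.image σ ↔ σ⁻¹ i ∈ S := by
  rw [Finset.mem_image]
  constructor
  · rintro ⟨j, hj, rfl⟩
    simpa using hj
  · exact fun h => ⟨_, h, by simp⟩

lemma toPerm_blend {g : Fin m → Equiv.Perm Q} {σ : Equiv.Perm (Fin m)} {α' β' : Fin m → Q}
    (hα : toPerm g σ α = α') (hβ : toPerm g σ β = β') (S : Finset (Fin m)) :
    toPerm g σ (blend α β S) = blend α' β' (S.image σ) := by
  subst hα hβ
  ext i
  simp only [blend, toPerm_apply, mem_image_perm]
  split_ifs <;> rfl

lemma blend_swap (S : Finset (Fin m)) : blend β α S = blend α β Sᶜ := by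
  ext i
  by_cases h : i ∈ S <;> simp [blend, h]

lemma toPerm_unique {X : Subgroup (Equiv.Perm (Fin m → Q))} (hXB : X ⊓ BaseG m Q = ⊥)
    {g g' : Fin m → Equiv.Perm Q} {σ : Equiv.Perm (Fin m)} (h : toPerm g σ ∈ X)
    (h' : toPerm g' σ ∈ X) : toPerm g σ = toPerm g' σ := by
  have h1 : toPerm g σ * (toPerm g' σ)⁻¹ ∈ X ⊓ BaseG m Q := by
    refine ⟨X.mul_mem h (X.inv_mem h'), ?_⟩
    rw [toPerm_inv, toPerm_mul, mul_inv_cancel]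
    exact ⟨_, rfl⟩
  rw [hXB, Subgroup.mem_bot] at h1
  exact mul_inv_eq_one.1 h1

lemma mem_projGroup_stabilizer {X : Subgroup (Equiv.Perm (Fin m → Q))} {σ : Equiv.Perm (Fin m)} :
    σ ∈ ProjGroup (X ⊓ MulAction.stabilizer (Equiv.Perm (Fin m → Q)) α) ↔
      ∃ g, toPerm g σ ∈ X ∧ toPerm g σ α = α := Iff.rfl

variable [DecidableEq Q] {C : Set (Fin m → Q)} {X : Subgroup (Equiv.Perm (Fin m → Q))}

/-- The groups induced on the coordinates by `X` and by the stabilizer of a codeword of a binary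
completely transitive code of size two. The hypothesis `X ∩ B = 1` is what keeps the latter from
being all of the former. -/
theorem IsCT.transPair (hX : X ≤ AutG m Q) (hXB : X ⊓ BaseG m Q = ⊥) (hCT : IsCT C X)
    (hδ : IsMinDist C m) (hα : α ∈ C) (hβ : β ∈ C) (hne : α ≠ β)
    (hC : ∀ ε ∈ C, ε = α ∨ ε = β) :
    TransPair (ProjGroup (X ⊓ MulAction.stabilizer (Equiv.Perm (Fin m → Q)) α)) (ProjGroup X) := by
  have hd := hδ.apply_ne hα hβ hne
  have hcases : ∀ x ∈ X, (x α = α ∧ x β = β) ∨ (x α = β ∧ x β = α) := by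
    intro x hx
    have h1 := hC _ (hCT.apply_mem ⟨α, hα⟩ hx hα)
    have h2 := hC _ (hCT.apply_mem ⟨α, hα⟩ hx hβ)
    have h3 : x α ≠ x β := x.injective.ne hne
    grind
  have hdist : ∀ S : Finset (Fin m), 2 * S.card ≤ m → distTo C (blend α β S) = S.card := by
    intro S hS
    refine hδ.distTo_eq_card hα (fun i => ?_) hS
    by_cases hi : i ∈ S <;> simp [blend, hi, (hd i).symm]
  have hsw : ∀ g σ, toPerm g σ ∈ X → toPerm g σ α = β →
      σ ∉ ProjGroup (X ⊓ MulAction.stabilizer (Equiv.Perm (Fin m → Q)) α) := by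
    rintro g σ hg hgα hσ
    obtain ⟨g', hg', hgα'⟩ := mem_projGroup_stabilizer.1 hσ
    rw [toPerm_unique hXB hg hg', hgα'] at hgα
    exact hne hgα
  have hmove : ∀ S T : Finset (Fin m), S.card = T.card → 2 * S.card ≤ m →
      (∃ σ ∈ ProjGroup (X ⊓ MulAction.stabilizer (Equiv.Perm (Fin m → Q)) α), S.image σ = T) ∨
      (∃ σ ∈ ProjGroup X, σ ∉ ProjGroup (X ⊓ MulAction.stabilizer (Equiv.Perm (Fin m → Q)) α) ∧
        S.image σ = Tᶜ) := by
    intro S T hST hS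
    obtain ⟨x, hx, hxe⟩ := hCT.exists_apply_eq ⟨α, hα⟩
      ((hdist S hS).trans (hST.trans (hdist T (hST ▸ hS)).symm))
    obtain ⟨g, σ, rfl⟩ := hX hx
    rcases hcases _ hx with ⟨h1, h2⟩ | ⟨h1, h2⟩
    · rw [toPerm_blend h1 h2] at hxe
      exact Or.inl ⟨σ, ⟨g, hx, h1⟩, blend_injective hd hxe⟩
    · rw [toPerm_blend h1 h2, blend_swap] at hxe
      refine Or.inr ⟨σ, ⟨g, hx⟩, hsw g σ hx h1, ?_⟩
      rw [← blend_injective hd hxe, compl_compl]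
  refine ⟨?_, ?_, ?_, ?_, fun S T hST hS => hmove S T hST hS.le⟩
  · rintro σ ⟨g, hg, -⟩
    exact ⟨g, hg⟩
  · rintro σ ⟨g, hg⟩ τ ⟨h, hh⟩ hσ hτ
    rcases hcases _ hg with ⟨h1, -⟩ | ⟨-, h2⟩
    · exact absurd ⟨g, hg, h1⟩ hσ
    rcases hcases _ hh with ⟨h3, -⟩ | ⟨h3, -⟩
    · exact absurd ⟨h, hh, h3⟩ hτ
    rw [mem_projGroup_stabilizer]
    refine ⟨_, toPerm_mul g h σ τ ▸ X.mul_mem hg hh, ?_⟩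
    rw [← toPerm_mul, Equiv.Perm.mul_apply, h3, h2]
  · obtain ⟨x, hx, hxe⟩ := hCT.exists_apply_eq ⟨α, hα⟩
      (((distTo_eq_zero ⟨α, hα⟩).2 hα).trans ((distTo_eq_zero ⟨α, hα⟩).2 hβ).symm)
    obtain ⟨g, σ, rfl⟩ := hX hx
    exact ⟨σ, ⟨g, hx⟩, hsw g σ hx hxe⟩
  · intro S T hST hS
    rcases hmove S T hST hS.le with h | ⟨σ, -, -, h⟩
    · exact h
    · have h1 := congrArg Finset.card h
      rw [Finset.card_image_of_injective _ σ.injective, Finset.card_compl, Fintype.card_fin] at h1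
      omega

/-- Exchanging `α i` with `α 0` in each coordinate carries a two-word code with everywhere
different words to the repetition code. -/
lemma codeEquiv_repCode (h0 : 0 < m) (hd : ∀ i, α i ≠ β i) (hQ : ∀ i v, v = α i ∨ v = β i)
    (hC : ∀ ε, ε ∈ C ↔ ε = α ∨ ε = β) : CodeEquiv C (RepCode m Q) := by
  let o : Fin m := ⟨0, h0⟩
  refine ⟨toPerm (fun i => Equiv.swap (α i) (α o)) 1, ⟨_, _, rfl⟩, ?_⟩
  have h1 : toPerm (fun i => Equiv.swap (α i) (α o)) 1 α = fun _ => α o := by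
    ext i
    simp
  have h2 : toPerm (fun i => Equiv.swap (α i) (α o)) 1 β = fun _ => β o := by
    ext i
    simp only [toPerm_apply, inv_one, Equiv.Perm.one_apply]
    have h3 : Equiv.swap (α i) (α o) (β i) ≠ α o := by
      rw [Ne, Equiv.swap_apply_eq_iff, Equiv.swap_apply_right]
      exact (hd i).symm
    exact (hQ o _).resolve_left h3
  have hCe : C = {α, β} := Set.ext hC
  rw [hCe, Set.image_pair, h1, h2]
  ext γ
  simp only [RepCode, Set.mem_insert_iff, Set.mem_singleton_iff, Set.mem_ofPred_eq]
  constructor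
  · rintro (rfl | rfl)
    exacts [⟨_, rfl⟩, ⟨_, rfl⟩]
  · rintro ⟨a, rfl⟩
    rcases hQ o a with rfl | rfl
    exacts [Or.inl rfl, Or.inr rfl]

end Binary

end CTC

open CTC in
/-- Proposition 3.3: an `X`-completely transitive code with
`m ≥ 5`, `|C| ≥ 2`, `X ∩ B = 1` and `δ = m` forces `q = 2`, `C` equivalent to
`Rep(m,2)`, `μ(X) = Sym(Fin m)` and `μ(X_α) = Alt(Fin m)` for all `α ∈ C`. -/
theorem statement15 {m q : ℕ} {Q : Type*} [Fintype Q] [DecidableEq Q]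
    (hm : 5 ≤ m) (hq2 : 2 ≤ q) (hcard : Fintype.card Q = q)
    (C : Set (Fin m → Q)) (hC : 2 ≤ C.ncard)
    (hδ : IsMinDist C m)
    (X : Subgroup (Equiv.Perm (Fin m → Q))) (hX : X ≤ AutG m Q)
    (hXB : X ⊓ BaseG m Q = ⊥) (hCT : IsCT C X) :
    q = 2 ∧ CodeEquiv C (RepCode m Q) ∧
    ProjGroup X = (⊤ : Subgroup (Equiv.Perm (Fin m))) ∧
    ∀ α ∈ C,
      {σ : Equiv.Perm (Fin m) | ∃ g, toPerm g σ ∈ X ∧ toPerm g σ α = α} =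
        ↑(alternatingGroup (Fin m)) := by
  have hAlt : ∀ α ∈ C, ProjGroup X = ⊤ ∧
      {σ : Equiv.Perm (Fin m) | ∃ g, toPerm g σ ∈ X ∧ toPerm g σ α = α} =
        ↑(alternatingGroup (Fin m)) := by
    intro α hα
    obtain ⟨β, hβ, hβα⟩ := Set.exists_ne_of_one_lt_ncard hC α
    have hT := hCT.transPair hX hXB hδ hα hβ hβα.symm
      fun ε hε => hCT.eq_or_eq hm hX hδ hα hβ hβα.symm hε
    have hG := hT.eq_top hm
    refine ⟨hG, ?_⟩
    rw [← hT.eq_alternating hG]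
    rfl
  obtain ⟨α, hα, β, hβ, hne, -⟩ := hδ.1
  have hd := hδ.apply_ne hα hβ hne
  have hQ : ∀ i v, v = α i ∨ v = β i := by
    intro i v
    obtain ⟨ε, hε, rfl⟩ := hCT.exists_codeword_apply_eq hm hX hδ i v
    rcases hCT.eq_or_eq hm hX hδ hα hβ hne hε with rfl | rfl
    exacts [Or.inl rfl, Or.inr rfl]
  refine ⟨?_, codeEquiv_repCode (by omega) hd hQ fun ε => ⟨hCT.eq_or_eq hm hX hδ hα hβ hne, ?_⟩,
    (hAlt α hα).1, fun ε hε => (hAlt ε hε).2⟩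
  · let o : Fin m := ⟨0, by omega⟩
    have huniv : (Finset.univ : Finset Q) = {α o, β o} := by
      ext v
      simpa using hQ o v
    rw [← hcard, ← Finset.card_univ, huniv, Finset.card_pair (hd o)]
  · rintro (rfl | rfl) <;> assumption
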